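/- arXiv:2507.00252 — 4 statements merged into one kernel-verified Lean document; each statement's English description precedes it below -/
import Mathlib

section
/- There exists a constant C > 0 such that for all n ≥ 2 the following holds. Let R be a family of at most n pairwise disjoint closed line segments in ℝ² (red) and B a family of at most n pairwise disjoint closed line segments in ℝ² (blue). Then the bipartite intersection graph G on vertex set R ∪ B, in which r ∈ R and b ∈ B are adjacent if and only if r ∩ b ≠ ∅ (and there are no edges within R or within B), admits a biclique cover of size at most C · n · (log₂ n)³. -/
/-!
The proof is a segment-tree argument in which `x`-coordinates are replaced by ranks.

After a shear no nondegenerate segment is vertical (`exists_shear`), so each segment is the graph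
of an affine function over a closed interval (`segment_eq_graph`). From then on only continuity
and disjointness of the graphs matter. Ranks of abscissae among the endpoints of all segments turn
every interval into an integer interval `[lo, hi]` with `hi < 2 ^ d`, and the dyadic blocks
`{u | u / 2 ^ k = j}` are the nodes of a segment tree. A block is *active* for `[lo, hi]` if its
parent block contains `lo` or `hi`; each interval has at most four active blocks per level, and each
of its points lies in an active block contained in the interval (`exists_dyadic`).

If a red and a blue segment meet at abscissa `x`, take for each the active block of `x` contained
in its interval. At the coarser of the two blocks one segment, say the red one, spans the whole
vertical slab, and the block is active for the other (`cov_curves`). In a fixed slab the spanning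
red segments are disjoint, hence linearly ordered from bottom to top, and by the intermediate value
theorem each blue segment meets a contiguous run of them (`cov_node`). Incidences between points and
runs of a linear order have small biclique covers, by the same dyadic decomposition applied to the
ranks in the linear order (`cov_convex`). Altogether this gives a cover of size `O(n (log n)²)`.
-/

/-! ### Covers of relations -/

/-- There is a finite list of bicliques of the relation `E`, of total size at most `k`, which
together cover all pairs satisfying `P`. -/
def Cov {α β : Type*} (E P : α → β → Prop) (k : ℕ) : Prop :=
  ∃ L : List (Finset α × Finset β),
    (∀ p ∈ L, ∀ a ∈ p.1, ∀ b ∈ p.2, E a b) ∧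
    (∀ a b, P a b → ∃ p ∈ L, a ∈ p.1 ∧ b ∈ p.2) ∧
    (L.map (fun p => p.1.card + p.2.card)).sum ≤ k

namespace Cov

variable {α β : Type*} {E P Q : α → β → Prop} {k l : ℕ}

lemma mono (h : Cov E P k) (hQ : ∀ a b, Q a b → P a b) (hk : k ≤ l) : Cov E Q l := by
  obtain ⟨L, h1, h2, h3⟩ := h
  exact ⟨L, h1, fun a b hab => h2 a b (hQ a b hab), h3.trans hk⟩

lemma of_empty (h : ∀ a b, ¬ P a b) : Cov E P k :=
  ⟨[], by simp, fun a b hab => absurd hab (h a b), by simp⟩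

lemma single (A : Finset α) (B : Finset β) (h : ∀ a ∈ A, ∀ b ∈ B, E a b) :
    Cov E (fun a b => a ∈ A ∧ b ∈ B) (A.card + B.card) :=
  ⟨[(A, B)], by simpa using h, by simp, by simp⟩

lemma union (h : Cov E P k) (h' : Cov E Q l) : Cov E (fun a b => P a b ∨ Q a b) (k + l) := by
  obtain ⟨L, h1, h2, h3⟩ := h
  obtain ⟨L', h1', h2', h3'⟩ := h'
  refine ⟨L ++ L', ?_, ?_, ?_⟩
  · intro p hp
    rcases List.mem_append.1 hp with hp | hp
    · exact h1 p hp
    · exact h1' p hp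
  · rintro a b (hab | hab)
    · obtain ⟨p, hp, hh⟩ := h2 a b hab
      exact ⟨p, List.mem_append_left _ hp, hh⟩
    · obtain ⟨p, hp, hh⟩ := h2' a b hab
      exact ⟨p, List.mem_append_right _ hp, hh⟩
  · rw [List.map_append, List.sum_append]
    omega

lemma swap (h : Cov E P k) : Cov (fun b a => E a b) (fun b a => P a b) k := by
  obtain ⟨L, h1, h2, h3⟩ := h
  refine ⟨L.map Prod.swap, ?_, ?_, ?_⟩
  · intro p hp
    obtain ⟨q, hq, rfl⟩ := List.mem_map.1 hp
    intro b hb a ha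
    exact h1 q hq a ha b hb
  · intro b a hab
    obtain ⟨p, hp, hh⟩ := h2 a b hab
    exact ⟨p.swap, List.mem_map_of_mem hp, hh.2, hh.1⟩
  · rw [List.map_map]
    refine le_trans (le_of_eq ?_) h3
    congr 1
    apply List.map_congr_left
    intro p _
    simp [add_comm]

lemma biUnion {ι : Type*} (s : Finset ι) (R : ι → α → β → Prop) (c : ι → ℕ)
    (h : ∀ i ∈ s, Cov E (R i) (c i)) :
    Cov E (fun a b => ∃ i ∈ s, R i a b) (∑ i ∈ s, c i) := by
  classical
  induction s using Finset.induction_on with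
  | empty => exact of_empty (by simp)
  | insert i s hi ih =>
    rw [Finset.sum_insert hi]
    refine ((h i (by simp)).union (ih fun j hj => h j (by simp [hj]))).mono ?_ le_rfl
    rintro a b ⟨j, hj, hab⟩
    rcases Finset.mem_insert.1 hj with rfl | hj
    · exact Or.inl hab
    · exact Or.inr ⟨j, hj, hab⟩

end Cov

/-! ### Dyadic blocks -/

/-- The block `{u | u / 2 ^ k = j}` is active for the interval `[lo, hi]`: its parent block
contains `lo` or `hi`. -/
def Active (k j lo hi : ℕ) : Prop := j / 2 = lo / 2 ^ (k + 1) ∨ j / 2 = hi / 2 ^ (k + 1)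

/-- The block `{u | u / 2 ^ k = j}` is contained in the interval `[lo, hi]`. -/
def Inside (k j lo hi : ℕ) : Prop := ∀ u, u / 2 ^ k = j → lo ≤ u ∧ u ≤ hi

lemma div_pow_succ (t k : ℕ) : t / 2 ^ k / 2 = t / 2 ^ (k + 1) := by
  rw [Nat.div_div_eq_div_mul, pow_succ]

lemma active_mono {k k' t lo hi : ℕ} (hk : k ≤ k') (h : Active k (t / 2 ^ k) lo hi) :
    Active k' (t / 2 ^ k') lo hi := by
  obtain ⟨e, rfl⟩ := Nat.exists_eq_add_of_le hk
  unfold Active at *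
  rw [div_pow_succ] at *
  have key : ∀ u : ℕ, u / 2 ^ (k + e + 1) = u / 2 ^ (k + 1) / 2 ^ e := by
    intro u
    rw [Nat.div_div_eq_div_mul, ← pow_add]
    congr 2
    omega
  rw [key t, key lo, key hi]
  rcases h with h | h
  · left; rw [h]
  · right; rw [h]

/-- The largest dyadic block around `t` contained in `[lo, hi]` is active. -/
lemma exists_dyadic {t lo hi d : ℕ} (h1 : lo ≤ t) (h2 : t ≤ hi) (hd : hi < 2 ^ d) :
    ∃ k ≤ d, Inside k (t / 2 ^ k) lo hi ∧ Active k (t / 2 ^ k) lo hi := by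
  classical
  have hex : ∃ k, ¬ Inside k (t / 2 ^ k) lo hi := by
    refine ⟨d + 1, fun h => ?_⟩
    have hlt : (2 : ℕ) ^ d < 2 ^ (d + 1) := Nat.pow_lt_pow_right (by norm_num) (by omega)
    have := h (2 ^ d) (by rw [Nat.div_eq_of_lt hlt, Nat.div_eq_of_lt (by omega)])
    omega
  have h0 : Inside 0 (t / 2 ^ 0) lo hi := by
    intro u hu
    simp only [pow_zero, Nat.div_one] at hu
    omega
  have hpos : Nat.find hex ≠ 0 := by
    intro h
    have := Nat.find_spec hex
    rw [h] at this
    exact this h0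
  obtain ⟨k, hk⟩ := Nat.exists_eq_succ_of_ne_zero hpos
  have hnot : ¬ Inside (k + 1) (t / 2 ^ (k + 1)) lo hi := by
    have := Nat.find_spec hex
    rwa [hk] at this
  have hin : Inside k (t / 2 ^ k) lo hi := by
    have := Nat.find_min hex (m := k) (by omega)
    simpa using this
  refine ⟨k, ?_, hin, ?_⟩
  · by_contra hlt
    have ht : t < 2 ^ k :=
      lt_of_le_of_lt h2 (hd.trans (Nat.pow_lt_pow_right (by norm_num) (by omega)))
    have hdk : (2 : ℕ) ^ d < 2 ^ k := Nat.pow_lt_pow_right (by norm_num) (by omega)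
    have := hin (2 ^ d) (by rw [Nat.div_eq_of_lt hdk, Nat.div_eq_of_lt ht])
    omega
  · unfold Inside at hnot
    push Not at hnot
    obtain ⟨u, hu, hu'⟩ := hnot
    unfold Active
    rw [div_pow_succ]
    by_cases hlo : lo ≤ u
    · right
      have h3 := hu' hlo
      have a1 := Nat.div_le_div_right (c := 2 ^ (k + 1)) h2
      have a2 := Nat.div_le_div_right (c := 2 ^ (k + 1)) h3.le
      omega
    · left
      have a1 := Nat.div_le_div_right (c := 2 ^ (k + 1)) h1
      have a2 := Nat.div_le_div_right (c := 2 ^ (k + 1)) (le_of_not_ge hlo)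
      omega

open Classical in
/-- At each level, every interval has at most four active blocks. -/
lemma sum_active_le {β : Type*} (T : Finset β) (lo hi : β → ℕ) (k N : ℕ) :
    ∑ j ∈ Finset.range N, (T.filter fun b => Active k j (lo b) (hi b)).card ≤ 4 * T.card := by
  have h := Finset.sum_card_bipartiteAbove_eq_sum_card_bipartiteBelow
    (s := Finset.range N) (t := T) (fun j b => Active k j (lo b) (hi b))
  unfold Finset.bipartiteAbove Finset.bipartiteBelow at h
  rw [h]
  calc _ ≤ ∑ _b ∈ T, 4 := by
        apply Finset.sum_le_sum
        intro b _
        set x := lo b / 2 ^ (k + 1) with hx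
        set y := hi b / 2 ^ (k + 1) with hy
        refine le_trans (Finset.card_le_card (t := {2 * x, 2 * x + 1, 2 * y, 2 * y + 1}) ?_)
          Finset.card_le_four
        intro j hj
        have h2 : j / 2 = x ∨ j / 2 = y := (Finset.mem_filter.1 hj).2
        simp only [Finset.mem_insert, Finset.mem_singleton]
        omega
    _ = 4 * T.card := by simp [mul_comm]

/-! ### Contiguous runs in a linear order -/

/-- Each `b ∈ T` is related by `P` to points of `S` between which, in the order given by `f`,
all points of `S` are related to `b` by `E`. The ranks of the points of `S` are decomposed
into dyadic blocks. -/
lemma cov_convex {α β : Type*} (E P : α → β → Prop) (S : Finset α) (T : Finset β)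
    (f : α → ℝ) (d : ℕ) (hS : S.card < 2 ^ d)
    (hconv : ∀ b ∈ T, ∀ r₁ ∈ S, ∀ r ∈ S, ∀ r₂ ∈ S, f r₁ ≤ f r → f r ≤ f r₂ →
      P r₁ b → P r₂ b → E r b) :
    Cov E (fun a b => a ∈ S ∧ b ∈ T ∧ P a b) ((d + 1) * (S.card + 4 * T.card)) := by
  classical
  set rk : α → ℕ := fun r => (S.filter fun s => f s < f r).card with hrk
  have rk_mono : ∀ r r', f r ≤ f r' → rk r ≤ rk r' := by
    intro r r' h
    apply Finset.card_le_card
    intro s hs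
    rw [Finset.mem_filter] at hs ⊢
    exact ⟨hs.1, hs.2.trans_le h⟩
  have rk_lt : ∀ r ∈ S, ∀ r', f r < f r' → rk r < rk r' := by
    intro r hr r' h
    apply Finset.card_lt_card
    rw [Finset.ssubset_iff_of_subset]
    · exact ⟨r, by simp [hr, h], by simp⟩
    · intro s hs
      rw [Finset.mem_filter] at hs ⊢
      exact ⟨hs.1, hs.2.trans h⟩
  have rk_bd : ∀ r, rk r < 2 ^ d := fun r =>
    lt_of_le_of_lt (Finset.card_filter_le _ _) hS
  set T' := T.filter fun b => ∃ r ∈ S, P r b with hT'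
  have hex : ∀ b : β, ∃ lo hi : ℕ, hi < 2 ^ d ∧ (b ∈ T' →
      (∀ r ∈ S, P r b → lo ≤ rk r ∧ rk r ≤ hi) ∧
      (∀ r ∈ S, lo ≤ rk r → rk r ≤ hi → E r b)) := by
    intro b
    by_cases hb : b ∈ T'
    · obtain ⟨hbT, r₀, hr₀, hP₀⟩ := Finset.mem_filter.1 hb
      have hne : (S.filter fun r => P r b).Nonempty := ⟨r₀, by simp [hr₀, hP₀]⟩
      obtain ⟨r₁, hr₁, h₁⟩ := Finset.exists_min_image _ f hne
      obtain ⟨r₂, hr₂, h₂⟩ := Finset.exists_max_image _ f hne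
      rw [Finset.mem_filter] at hr₁ hr₂
      refine ⟨rk r₁, rk r₂, rk_bd _, fun _ => ⟨?_, ?_⟩⟩
      · intro r hr hP
        have hm : r ∈ S.filter fun r => P r b := by simp [hr, hP]
        exact ⟨rk_mono _ _ (h₁ r hm), rk_mono _ _ (h₂ r hm)⟩
      · intro r hr h3 h4
        refine hconv b hbT r₁ hr₁.1 r hr r₂ hr₂.1 ?_ ?_ hr₁.2 hr₂.2
        · by_contra hlt
          exact absurd (rk_lt r hr r₁ (lt_of_not_ge hlt)) (by omega)
        · by_contra hlt
          exact absurd (rk_lt r₂ hr₂.1 r (lt_of_not_ge hlt)) (by omega)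
    · exact ⟨0, 0, by positivity, fun h => absurd h hb⟩
  choose lo hi hhi hE using hex
  have hcov := Cov.biUnion (E := E) (Finset.range (d + 1))
    (fun k a b => ∃ j ∈ Finset.range (2 ^ d),
      a ∈ S.filter (fun r => rk r / 2 ^ k = j) ∧
      b ∈ T'.filter (fun b => Active k j (lo b) (hi b) ∧ Inside k j (lo b) (hi b)))
    _ (fun k _ => Cov.biUnion (Finset.range (2 ^ d)) _ _ (fun j _ => Cov.single
      (S.filter (fun r => rk r / 2 ^ k = j))
      (T'.filter (fun b => Active k j (lo b) (hi b) ∧ Inside k j (lo b) (hi b))) (by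
        intro a ha b hb
        rw [Finset.mem_filter] at ha hb
        have := hb.2.2 _ ha.2
        exact (hE b hb.1).2 a ha.1 this.1 this.2)))
  refine hcov.mono ?_ ?_
  · rintro a b ⟨ha, hb, hP⟩
    have hbT : b ∈ T' := by
      rw [hT', Finset.mem_filter]
      exact ⟨hb, a, ha, hP⟩
    obtain ⟨h1, h2⟩ := (hE b hbT).1 a ha hP
    obtain ⟨k, hk, hin, hact⟩ := exists_dyadic h1 h2 (hhi b)
    refine ⟨k, by simp; omega, rk a / 2 ^ k, ?_, ?_, ?_⟩
    · rw [Finset.mem_range]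
      exact lt_of_le_of_lt (Nat.div_le_self _ _) (rk_bd a)
    · simp [ha]
    · rw [Finset.mem_filter]
      exact ⟨hbT, hact, hin⟩
  · calc _ ≤ ∑ _k ∈ Finset.range (d + 1), (S.card + 4 * T.card) := by
          apply Finset.sum_le_sum
          intro k _
          rw [Finset.sum_add_distrib]
          apply add_le_add
          · rw [← Finset.card_eq_sum_card_fiberwise]
            intro r hr
            rw [Finset.mem_coe, Finset.mem_range]
            exact lt_of_le_of_lt (Nat.div_le_self _ _) (rk_bd r)
          · calc _ ≤ ∑ j ∈ Finset.range (2 ^ d),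
                  (T'.filter fun b => Active k j (lo b) (hi b)).card := by
                  apply Finset.sum_le_sum
                  intro j _
                  apply Finset.card_le_card
                  intro b hb
                  rw [Finset.mem_filter] at hb ⊢
                  exact ⟨hb.1, hb.2.1⟩
              _ ≤ 4 * T'.card := sum_active_le _ _ _ _ _
              _ ≤ 4 * T.card := Nat.mul_le_mul_left _ (Finset.card_filter_le _ _)
      _ = _ := by simp

/-! ### Curves over intervals -/

/-- The graphs of `f a` over `[l a, r a]` and of `g b` over `[l' b, r' b]` meet at an abscissa
in `X`. -/
def MeetOn {α β : Type*} (l r : α → ℝ) (f : α → ℝ → ℝ) (l' r' : β → ℝ) (g : β → ℝ → ℝ)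
    (X : Set ℝ) (a : α) (b : β) : Prop :=
  ∃ x ∈ X, (l a ≤ x ∧ x ≤ r a) ∧ (l' b ≤ x ∧ x ≤ r' b) ∧ f a x = g b x

lemma exists_eq_of_le_of_le {f g : ℝ → ℝ} (hf : Continuous f) (hg : Continuous g) {u v : ℝ}
    (hu : f u ≤ g u) (hv : g v ≤ f v) : ∃ x ∈ Set.uIcc u v, f x = g x := by
  have h := intermediate_value_uIcc (a := u) (b := v) (f := fun x => f x - g x)
    (hf.sub hg).continuousOn
  have h0 : (0 : ℝ) ∈ Set.uIcc (f u - g u) (f v - g v) := by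
    rw [Set.mem_uIcc]
    left
    constructor <;> linarith
  obtain ⟨x, hx, hx0⟩ := h h0
  exact ⟨x, hx, by simpa [sub_eq_zero] using hx0⟩

/-- Within a vertical slab `X`, the curves of `S` spanning `X` are linearly ordered and every other
curve meets a contiguous run of them. -/
lemma cov_node {α β : Type*} (l r : α → ℝ) (f : α → ℝ → ℝ) (l' r' : β → ℝ) (g : β → ℝ → ℝ)
    (hf : ∀ a, Continuous (f a)) (hg : ∀ b, Continuous (g b))
    (hdisj : ∀ a a', a ≠ a' → ¬ MeetOn l r f l r f Set.univ a a')
    (X : Set ℝ) (hX : X.OrdConnected) (S : Finset α) (T : Finset β)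
    (hS : ∀ a ∈ S, ∀ x ∈ X, l a ≤ x ∧ x ≤ r a) (d : ℕ) (hd : S.card < 2 ^ d) :
    Cov (MeetOn l r f l' r' g Set.univ)
      (fun a b => a ∈ S ∧ b ∈ T ∧ MeetOn l r f l' r' g X a b)
      ((d + 1) * (S.card + 4 * T.card)) := by
  rcases X.eq_empty_or_nonempty with rfl | ⟨x₀, hx₀⟩
  · apply Cov.of_empty
    rintro a b ⟨_, _, x, hx, _⟩
    exact hx
  have hord : ∀ a ∈ S, ∀ a' ∈ S, f a x₀ ≤ f a' x₀ → ∀ x ∈ X, f a x ≤ f a' x := by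
    intro a ha a' ha' h0 x hx
    by_contra hlt
    obtain ⟨z, hz, hzeq⟩ := exists_eq_of_le_of_le (hf a) (hf a') h0 (le_of_not_ge hlt)
    have hzX : z ∈ X := hX.uIcc_subset hx₀ hx hz
    refine hdisj a a' ?_ ⟨z, trivial, hS a ha z hzX, hS a' ha' z hzX, hzeq⟩
    rintro rfl
    exact hlt le_rfl
  apply cov_convex _ _ S T (fun a => f a x₀) d hd
  rintro b _ a₁ h₁ a ha a₂ h₂ hle₁ hle₂ ⟨x₁, hx₁, _, hb₁, he₁⟩ ⟨x₂, hx₂, _, hb₂, he₂⟩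
  have i₁ := hord a₁ h₁ a ha hle₁ x₁ hx₁
  have i₂ := hord a ha a₂ h₂ hle₂ x₂ hx₂
  obtain ⟨z, hz, hzeq⟩ := exists_eq_of_le_of_le (hg b) (hf a) (he₁ ▸ i₁) (he₂ ▸ i₂)
  have hzX : z ∈ X := hX.uIcc_subset hx₁ hx₂ hz
  have hzb : z ∈ Set.Icc (l' b) (r' b) := Set.ordConnected_Icc.uIcc_subset hb₁ hb₂ hz
  exact ⟨z, trivial, hS a ha z hzX, hzb, hzeq.symm⟩

/-- Meeting pairs at abscissae `x` where the segment tree places the first curve at a block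
`t / 2 ^ k` of `t = ρ x`, spanning the corresponding slab, and this block is active for the
second curve. -/
lemma cov_half {α β : Type*} [Fintype α] [Fintype β]
    (l r : α → ℝ) (f : α → ℝ → ℝ) (l' r' : β → ℝ) (g : β → ℝ → ℝ)
    (hf : ∀ a, Continuous (f a)) (hg : ∀ b, Continuous (g b))
    (hdisj : ∀ a a', a ≠ a' → ¬ MeetOn l r f l r f Set.univ a a')
    (ρ : ℝ → ℕ) (hρ : Monotone ρ) (d : ℕ) (hρd : ∀ x, ρ x < 2 ^ d)
    (hl : ∀ a x, ρ (l a) ≤ ρ x → l a ≤ x) (hr : ∀ a x, ρ x ≤ ρ (r a) → x ≤ r a)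
    (n : ℕ) (hα : Fintype.card α ≤ n) (hβ : Fintype.card β ≤ n) (hn : n < 2 ^ d) :
    Cov (MeetOn l r f l' r' g Set.univ)
      (fun a b => ∃ x, MeetOn l r f l' r' g {x} a b ∧ ∃ k ≤ d,
        Inside k (ρ x / 2 ^ k) (ρ (l a)) (ρ (r a)) ∧ Active k (ρ x / 2 ^ k) (ρ (l a)) (ρ (r a)) ∧
        Active k (ρ x / 2 ^ k) (ρ (l' b)) (ρ (r' b)))
      (20 * (d + 1) ^ 2 * n) := by
  classical
  set S : ℕ → ℕ → Finset α := fun k j => Finset.univ.filter fun a =>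
    Inside k j (ρ (l a)) (ρ (r a)) ∧ Active k j (ρ (l a)) (ρ (r a)) with hS
  set T : ℕ → ℕ → Finset β := fun k j => Finset.univ.filter fun b =>
    Active k j (ρ (l' b)) (ρ (r' b)) with hT
  set X : ℕ → ℕ → Set ℝ := fun k j => {x | ρ x / 2 ^ k = j} with hX
  have hXc : ∀ k j, (X k j).OrdConnected := by
    intro k j
    refine ⟨fun x hx y hy z hz => ?_⟩
    have hx' : ρ x / 2 ^ k = j := hx
    have hy' : ρ y / 2 ^ k = j := hy
    have a1 := Nat.div_le_div_right (c := 2 ^ k) (hρ hz.1)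
    have a2 := Nat.div_le_div_right (c := 2 ^ k) (hρ hz.2)
    change ρ z / 2 ^ k = j
    omega
  have hcov := Cov.biUnion (E := MeetOn l r f l' r' g Set.univ) (Finset.range (d + 1))
    (fun k a b => ∃ j ∈ Finset.range (2 ^ d),
      a ∈ S k j ∧ b ∈ T k j ∧ MeetOn l r f l' r' g (X k j) a b) _
    (fun k _ => Cov.biUnion (Finset.range (2 ^ d)) _ _ (fun j _ =>
      cov_node l r f l' r' g hf hg hdisj (X k j) (hXc k j) (S k j) (T k j) (by
        intro a ha x hx
        have h := (Finset.mem_filter.1 ha).2.1 (ρ x) hx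
        exact ⟨hl a x h.1, hr a x h.2⟩) d
        (lt_of_le_of_lt (Finset.card_le_univ _) (lt_of_le_of_lt hα hn))))
  refine hcov.mono ?_ ?_
  · rintro a b ⟨x, ⟨x', hx', hm⟩, k, hk, hin, hact, hact'⟩
    obtain rfl : x' = x := hx'
    refine ⟨k, by simp; omega, ρ x' / 2 ^ k, ?_, ?_, ?_, x', rfl, hm⟩
    · rw [Finset.mem_range]
      exact lt_of_le_of_lt (Nat.div_le_self _ _) (hρd _)
    · simp only [hS, Finset.mem_filter, Finset.mem_univ, true_and]
      exact ⟨hin, hact⟩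
    · simp only [hT, Finset.mem_filter, Finset.mem_univ, true_and]
      exact hact'
  · calc _ ≤ ∑ _k ∈ Finset.range (d + 1), (d + 1) * (4 * n + 4 * (4 * n)) := by
          apply Finset.sum_le_sum
          intro k _
          rw [← Finset.mul_sum]
          apply Nat.mul_le_mul_left
          rw [Finset.sum_add_distrib, ← Finset.mul_sum]
          apply add_le_add
          · calc _ ≤ ∑ j ∈ Finset.range (2 ^ d), ((Finset.univ : Finset α).filter
                  fun a => Active k j (ρ (l a)) (ρ (r a))).card := by
                  apply Finset.sum_le_sum
                  intro j _
                  apply Finset.card_le_card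
                  intro a ha
                  rw [Finset.mem_filter] at ha ⊢
                  exact ⟨ha.1, ha.2.2⟩
              _ ≤ 4 * Fintype.card α := sum_active_le _ _ _ _ _
              _ ≤ 4 * n := Nat.mul_le_mul_left _ hα
          · apply Nat.mul_le_mul_left
            exact (sum_active_le _ _ _ _ _).trans (Nat.mul_le_mul_left _ hβ)
      _ = _ := by
          rw [Finset.sum_const, Finset.card_range, smul_eq_mul]
          ring

/-- A monotone rank function on `ℝ` which separates the points of a finite set `X` from all other
points: points of `X` get odd ranks, the gaps between them even ranks. -/
lemma exists_rank (X : Finset ℝ) : ∃ ρ : ℝ → ℕ, Monotone ρ ∧ (∀ x, ρ x ≤ 2 * X.card) ∧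
    (∀ e ∈ X, ∀ x, ρ e ≤ ρ x → e ≤ x) ∧ (∀ e ∈ X, ∀ x, ρ x ≤ ρ e → x ≤ e) := by
  classical
  set p : ℝ → ℕ := fun x => (X.filter fun y => y < x).card with hp
  set q : ℝ → ℕ := fun x => (X.filter fun y => y ≤ x).card with hq
  have hpm : Monotone p := fun x y h => Finset.card_le_card fun z hz => by
    rw [Finset.mem_filter] at hz ⊢
    exact ⟨hz.1, hz.2.trans_le h⟩
  have hqm : Monotone q := fun x y h => Finset.card_le_card fun z hz => by
    rw [Finset.mem_filter] at hz ⊢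
    exact ⟨hz.1, hz.2.trans h⟩
  refine ⟨fun x => p x + q x, hpm.add hqm, ?_, ?_, ?_⟩
  · intro x
    have h1 : p x ≤ X.card := Finset.card_filter_le _ _
    have h2 : q x ≤ X.card := Finset.card_filter_le _ _
    change p x + q x ≤ _
    omega
  · intro e he x h
    by_contra hlt
    have hlt := lt_of_not_ge hlt
    have h1 := hpm hlt.le
    have h2 : q x < q e := by
      apply Finset.card_lt_card
      rw [Finset.ssubset_iff_of_subset]
      · exact ⟨e, by simp [he], by simp [hlt]⟩
      · intro z hz
        rw [Finset.mem_filter] at hz ⊢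
        exact ⟨hz.1, hz.2.trans hlt.le⟩
    change p e + q e ≤ p x + q x at h
    omega
  · intro e he x h
    by_contra hlt
    have hlt := lt_of_not_ge hlt
    have h1 := hqm hlt.le
    have h2 : p e < p x := by
      apply Finset.card_lt_card
      rw [Finset.ssubset_iff_of_subset]
      · exact ⟨e, by simp [he, hlt], by simp⟩
      · intro z hz
        rw [Finset.mem_filter] at hz ⊢
        exact ⟨hz.1, hz.2.trans hlt⟩
    change p x + q x ≤ p e + q e at h
    omega

lemma cov_curves {α β : Type*} [Fintype α] [Fintype β]
    (l r : α → ℝ) (f : α → ℝ → ℝ) (l' r' : β → ℝ) (g : β → ℝ → ℝ)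
    (hf : ∀ a, Continuous (f a)) (hg : ∀ b, Continuous (g b))
    (hdisj : ∀ a a', a ≠ a' → ¬ MeetOn l r f l r f Set.univ a a')
    (hdisj' : ∀ b b', b ≠ b' → ¬ MeetOn l' r' g l' r' g Set.univ b b')
    (n d : ℕ) (hα : Fintype.card α ≤ n) (hβ : Fintype.card β ≤ n) (hn : 8 * n < 2 ^ d) :
    Cov (MeetOn l r f l' r' g Set.univ) (MeetOn l r f l' r' g Set.univ)
      (40 * (d + 1) ^ 2 * n) := by
  classical
  set X : Finset ℝ := (Finset.univ.image l ∪ Finset.univ.image r) ∪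
    (Finset.univ.image l' ∪ Finset.univ.image r') with hX
  have hXc : X.card ≤ 4 * n := by
    have h1 := Finset.card_image_le (s := (Finset.univ : Finset α)) (f := l)
    have h2 := Finset.card_image_le (s := (Finset.univ : Finset α)) (f := r)
    have h3 := Finset.card_image_le (s := (Finset.univ : Finset β)) (f := l')
    have h4 := Finset.card_image_le (s := (Finset.univ : Finset β)) (f := r')
    have h5 := Finset.card_union_le (Finset.univ.image l) (Finset.univ.image r)
    have h6 := Finset.card_union_le (Finset.univ.image l') (Finset.univ.image r')
    have h7 := Finset.card_union_le (Finset.univ.image l ∪ Finset.univ.image r)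
      (Finset.univ.image l' ∪ Finset.univ.image r')
    rw [Finset.card_univ] at h1 h2 h3 h4
    rw [hX]
    omega
  obtain ⟨ρ, hρ, hρX, hle, hge⟩ := exists_rank X
  have hρd : ∀ x, ρ x < 2 ^ d := fun x => by
    have := hρX x
    omega
  have m1 : ∀ a, l a ∈ X := fun a => by simp [hX]
  have m2 : ∀ a, r a ∈ X := fun a => by simp [hX]
  have m3 : ∀ b, l' b ∈ X := fun b => by simp [hX]
  have m4 : ∀ b, r' b ∈ X := fun b => by simp [hX]
  have c1 := cov_half l r f l' r' g hf hg hdisj ρ hρ d hρd (fun a => hle _ (m1 a))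
    (fun a => hge _ (m2 a)) n hα hβ (by omega)
  have c2 := (cov_half l' r' g l r f hg hf hdisj' ρ hρ d hρd (fun a => hle _ (m3 a))
    (fun a => hge _ (m4 a)) n hβ hα (by omega)).swap
  have symm : ∀ Y a b, MeetOn l' r' g l r f Y b a ↔ MeetOn l r f l' r' g Y a b := by
    intro Y a b
    constructor
    · rintro ⟨x, hx, h1, h2, h3⟩
      exact ⟨x, hx, h2, h1, h3.symm⟩
    · rintro ⟨x, hx, h1, h2, h3⟩
      exact ⟨x, hx, h2, h1, h3.symm⟩
  simp only [symm] at c2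
  refine (c1.union c2).mono ?_ (le_of_eq (by ring))
  rintro a b ⟨x, _, h1, h2, h3⟩
  obtain ⟨k, hk, hin, hact⟩ := exists_dyadic (hρ h1.1) (hρ h1.2) (hρd _)
  obtain ⟨k', hk', hin', hact'⟩ := exists_dyadic (hρ h2.1) (hρ h2.2) (hρd _)
  -- The coarser of the two blocks around `ρ x` is active for both curves.
  rcases le_total k' k with hkk | hkk
  · exact Or.inl ⟨x, ⟨x, rfl, h1, h2, h3⟩, k, hk, hin, hact, active_mono hkk hact'⟩
  · exact Or.inr ⟨x, ⟨x, rfl, h1, h2, h3⟩, k', hk', hin', hact', active_mono hkk hact⟩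

/-! ### From segments to curves -/

/-- In the sheared coordinates `(z.1 + ε * z.2, z.2)`, a segment which is a point or is not vertical
is the graph of an affine function over a closed interval. -/
lemma segment_eq_graph (ε : ℝ) (p q : ℝ × ℝ) (h : p ≠ q → q.1 + ε * q.2 ≠ p.1 + ε * p.2) :
    ∃ l r m c : ℝ, ∀ z : ℝ × ℝ, z ∈ segment ℝ p q ↔
      (l ≤ z.1 + ε * z.2 ∧ z.1 + ε * z.2 ≤ r) ∧ z.2 = m * (z.1 + ε * z.2) + c := by
  wlog hle : p.1 + ε * p.2 ≤ q.1 + ε * q.2 generalizing p q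
  · rw [segment_symm]
    exact this q p (fun hne => (h hne.symm).symm) (le_of_not_ge hle)
  by_cases hpq : p = q
  · subst hpq
    refine ⟨p.1 + ε * p.2, p.1 + ε * p.2, 0, p.2, fun z => ?_⟩
    rw [segment_same, Set.mem_singleton_iff]
    constructor
    · rintro rfl
      exact ⟨⟨le_rfl, le_rfl⟩, by ring⟩
    · rintro ⟨⟨h1, h2⟩, h3⟩
      have h4 : z.2 = p.2 := by linarith
      rw [h4] at h1 h2
      exact Prod.ext (by linarith) h4
  · have hlt : 0 < (q.1 + ε * q.2) - (p.1 + ε * p.2) :=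
      sub_pos.2 (lt_of_le_of_ne hle (h hpq).symm)
    set D := (q.1 + ε * q.2) - (p.1 + ε * p.2) with hD
    refine ⟨p.1 + ε * p.2, q.1 + ε * q.2, (q.2 - p.2) / D,
      p.2 - (q.2 - p.2) / D * (p.1 + ε * p.2), fun z => ?_⟩
    rw [segment_eq_image]
    constructor
    · rintro ⟨t, ⟨ht0, ht1⟩, rfl⟩
      simp only [Prod.fst_add, Prod.snd_add, Prod.smul_fst, Prod.smul_snd, smul_eq_mul]
      refine ⟨⟨?_, ?_⟩, ?_⟩
      · nlinarith [mul_nonneg ht0 hlt.le]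
      · nlinarith [mul_nonneg (sub_nonneg.2 ht1) hlt.le]
      · have e : (1 - t) * p.1 + t * q.1 + ε * ((1 - t) * p.2 + t * q.2)
            = (p.1 + ε * p.2) + t * D := by rw [hD]; ring
        rw [e]
        field_simp
        ring
    · rintro ⟨⟨h1, h2⟩, h3⟩
      set t := (z.1 + ε * z.2 - (p.1 + ε * p.2)) / D with ht
      have htD : t * D = z.1 + ε * z.2 - (p.1 + ε * p.2) := by
        rw [ht]; field_simp
      have hz2 : z.2 = (1 - t) * p.2 + t * q.2 := by
        rw [h3, ht]
        field_simp
        ring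
      refine ⟨t, ⟨div_nonneg (by linarith) hlt.le, (div_le_one hlt).2 (by linarith)⟩, ?_⟩
      apply Prod.ext
      · simp only [Prod.fst_add, Prod.smul_fst, smul_eq_mul]
        rw [hD] at htD
        have : ε * z.2 = ε * ((1 - t) * p.2 + t * q.2) := by rw [← hz2]
        linarith
      · simp only [Prod.snd_add, Prod.smul_snd, smul_eq_mul]
        exact hz2.symm

/-- Only finitely many shears make one of finitely many nondegenerate segments vertical. -/
lemma exists_shear {ι : Type*} [Fintype ι] (p q : ι → ℝ × ℝ) :
    ∃ ε : ℝ, ∀ i, p i ≠ q i → (q i).1 + ε * (q i).2 ≠ (p i).1 + ε * (p i).2 := by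
  classical
  obtain ⟨ε, hε⟩ := Infinite.exists_notMem_finset
    (Finset.univ.image fun i => -((q i).1 - (p i).1) / ((q i).2 - (p i).2))
  refine ⟨ε, fun i hne heq => ?_⟩
  by_cases h2 : (q i).2 - (p i).2 = 0
  · apply hne
    have h2' : (q i).2 = (p i).2 := by linarith
    rw [h2'] at heq
    exact Prod.ext (by linarith) h2'.symm
  · apply hε
    rw [Finset.mem_image]
    refine ⟨i, Finset.mem_univ _, ?_⟩
    rw [div_eq_iff h2]
    linarith


/-- A biclique cover of a simple graph `G`: a finite family of pairs of disjoint
vertex sets `(A i, B i)` such that every pair in `A i × B i` is an edge of `G`,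
and every edge of `G` is covered by at least one biclique. -/
def IsBicliqueCover {V : Type*} (G : SimpleGraph V) {m : ℕ}
    (A B : Fin m → Finset V) : Prop :=
  (∀ i, Disjoint (A i) (B i)) ∧
  (∀ i, ∀ a ∈ A i, ∀ b ∈ B i, G.Adj a b) ∧
  (∀ u v, G.Adj u v → ∃ i, (u ∈ A i ∧ v ∈ B i) ∨ (v ∈ A i ∧ u ∈ B i))

/-- A biclique partition: a biclique cover in which every edge is covered by
exactly one biclique. -/
def IsBicliquePartition {V : Type*} (G : SimpleGraph V) {m : ℕ}
    (A B : Fin m → Finset V) : Prop :=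
  (∀ i, Disjoint (A i) (B i)) ∧
  (∀ i, ∀ a ∈ A i, ∀ b ∈ B i, G.Adj a b) ∧
  (∀ u v, G.Adj u v → ∃! i, (u ∈ A i ∧ v ∈ B i) ∨ (v ∈ A i ∧ u ∈ B i))

/-- The size of a biclique cover: the sum of `|A i| + |B i|`. -/
def coverSize {V : Type*} {m : ℕ} (A B : Fin m → Finset V) : ℕ :=
  ∑ i, ((A i).card + (B i).card)

/-- The bipartite intersection graph between at most `n` pairwise disjoint red
segments and at most `n` pairwise disjoint blue segments in the plane admits a
biclique cover of size `O(n (log₂ n)³)`. -/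
theorem stmt_16 :
    ∃ C : ℝ, 0 < C ∧ ∀ n : ℕ, 2 ≤ n → ∀ nr nb : ℕ, nr ≤ n → nb ≤ n →
      ∀ (red : Fin nr → Set (ℝ × ℝ)) (blue : Fin nb → Set (ℝ × ℝ)),
      (∀ i, ∃ p q : ℝ × ℝ, red i = segment ℝ p q) →
      (∀ i, ∃ p q : ℝ × ℝ, blue i = segment ℝ p q) →
      (∀ i j, i ≠ j → red i ∩ red j = ∅) →
      (∀ i j, i ≠ j → blue i ∩ blue j = ∅) →
      ∀ G : SimpleGraph (Fin nr ⊕ Fin nb),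
      (∀ i j, G.Adj (.inl i) (.inr j) ↔ (red i ∩ blue j).Nonempty) →
      (∀ i j, ¬ G.Adj (.inl i) (.inl j)) →
      (∀ i j, ¬ G.Adj (.inr i) (.inr j)) →
      ∃ (m : ℕ) (A B : Fin m → Finset (Fin nr ⊕ Fin nb)),
        IsBicliqueCover G A B ∧
        (coverSize A B : ℝ) ≤ C * (n : ℝ) * (Real.logb 2 n) ^ 3 := by
  refine ⟨1440, by norm_num, ?_⟩
  intro n hn nr nb hnr hnb red blue hred hblue hrd hbd G hG hGr hGb
  choose p q hpq using hred
  choose p' q' hpq' using hblue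
  obtain ⟨ε, hε⟩ := exists_shear (Sum.elim p p') (Sum.elim q q')
  have hr := fun i => segment_eq_graph ε (p i) (q i) (hε (.inl i))
  have hb := fun i => segment_eq_graph ε (p' i) (q' i) (hε (.inr i))
  simp only [← hpq] at hr
  simp only [← hpq'] at hb
  choose l r m c hR using hr
  choose l' r' m' c' hB using hb
  set f : Fin nr → ℝ → ℝ := fun i x => m i * x + c i with hf
  set g : Fin nb → ℝ → ℝ := fun i x => m' i * x + c' i with hg
  -- The point of the plane with sheared abscissa `x` and ordinate `y` is `(x - ε * y, y)`.
  have hinter : ∀ i j, MeetOn l r f l' r' g Set.univ i j ↔ (red i ∩ blue j).Nonempty := by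
    intro i j
    constructor
    · rintro ⟨x, -, h1, h2, h3⟩
      refine ⟨(x - ε * f i x, f i x), (hR i _).2 ?_, (hB j _).2 ?_⟩
      · simpa using ⟨h1, rfl⟩
      · simpa using ⟨h2, h3⟩
    · rintro ⟨z, hz1, hz2⟩
      obtain ⟨h1, h2⟩ := (hR i z).1 hz1
      obtain ⟨h3, h4⟩ := (hB j z).1 hz2
      exact ⟨_, trivial, h1, h3, h2.symm.trans h4⟩
  have hd1 : ∀ i i', i ≠ i' → ¬ MeetOn l r f l r f Set.univ i i' := by
    rintro i i' hne ⟨x, -, h1, h2, h3⟩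
    have hmem : (x - ε * f i x, f i x) ∈ red i ∩ red i' :=
      ⟨(hR i _).2 (by simpa using ⟨h1, rfl⟩), (hR i' _).2 (by simpa using ⟨h2, h3⟩)⟩
    rw [hrd i i' hne] at hmem
    exact hmem
  have hd2 : ∀ i i', i ≠ i' → ¬ MeetOn l' r' g l' r' g Set.univ i i' := by
    rintro i i' hne ⟨x, -, h1, h2, h3⟩
    have hmem : (x - ε * g i x, g i x) ∈ blue i ∩ blue i' :=
      ⟨(hB i _).2 (by simpa using ⟨h1, rfl⟩), (hB i' _).2 (by simpa using ⟨h2, h3⟩)⟩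
    rw [hbd i i' hne] at hmem
    exact hmem
  have hlt : 8 * n < 2 ^ (Nat.log 2 n + 4) := by
    have := Nat.lt_pow_succ_log_self (b := 2) (by norm_num) n
    rw [Nat.succ_eq_add_one, pow_succ] at this
    rw [pow_add]
    omega
  obtain ⟨L, hL1, hL2, hL3⟩ := cov_curves l r f l' r' g
    (fun a => by simp only [hf]; fun_prop) (fun b => by simp only [hg]; fun_prop)
    hd1 hd2 n (Nat.log 2 n + 4) (by simpa using hnr) (by simpa using hnb) hlt
  refine ⟨L.length, fun i => (L.get i).1.map Function.Embedding.inl,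
    fun i => (L.get i).2.map Function.Embedding.inr, ⟨?_, ?_, ?_⟩, ?_⟩
  · intro i
    rw [Finset.disjoint_left]
    intro v hv hv'
    obtain ⟨a, _, rfl⟩ := Finset.mem_map.1 hv
    obtain ⟨b, _, hb⟩ := Finset.mem_map.1 hv'
    exact absurd hb (by simp)
  · intro i u hu v hv
    obtain ⟨a, ha, rfl⟩ := Finset.mem_map.1 hu
    obtain ⟨b, hb, rfl⟩ := Finset.mem_map.1 hv
    exact (hG a b).2 ((hinter a b).1 (hL1 _ (L.get_mem i) a ha b hb))
  · have key : ∀ a b, G.Adj (.inl a) (.inr b) → ∃ i : Fin L.length,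
        Sum.inl a ∈ (L.get i).1.map (Function.Embedding.inl : Fin nr ↪ Fin nr ⊕ Fin nb) ∧
        Sum.inr b ∈ (L.get i).2.map (Function.Embedding.inr : Fin nb ↪ Fin nr ⊕ Fin nb) := by
      intro a b hab
      obtain ⟨P, hP, h1, h2⟩ := hL2 a b ((hinter a b).2 ((hG a b).1 hab))
      obtain ⟨i, rfl⟩ := List.mem_iff_get.1 hP
      exact ⟨i, Finset.mem_map_of_mem _ h1, Finset.mem_map_of_mem _ h2⟩
    rintro (a | a) (b | b) hab
    · exact absurd hab (hGr a b)
    · obtain ⟨i, hi⟩ := key a b hab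
      exact ⟨i, Or.inl hi⟩
    · obtain ⟨i, hi⟩ := key b a hab.symm
      exact ⟨i, Or.inr hi⟩
    · exact absurd hab (hGb a b)
  · have hsize : coverSize (fun i => (L.get i).1.map Function.Embedding.inl)
        (fun i => (L.get i).2.map (Function.Embedding.inr : Fin nb ↪ Fin nr ⊕ Fin nb))
        ≤ 40 * (Nat.log 2 n + 4 + 1) ^ 2 * n := by
      refine le_trans (le_of_eq ?_) hL3
      unfold coverSize
      simp only [Finset.card_map]
      exact Fin.sum_univ_fun_getElem L (fun p => p.1.card + p.2.card)
    have hlog : (Nat.log 2 n : ℝ) ≤ Real.logb 2 n := by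
      exact_mod_cast Real.natLog_le_logb n 2
    have hlog1 : (1 : ℝ) ≤ Real.logb 2 n := by
      rw [Real.le_logb_iff_rpow_le (by norm_num) (by positivity)]
      simpa using (by exact_mod_cast hn : (2 : ℝ) ≤ n)
    set x := Real.logb 2 n with hx
    have hcast : ((40 * (Nat.log 2 n + 4 + 1) ^ 2 * n : ℕ) : ℝ)
        = 40 * ((Nat.log 2 n : ℝ) + 5) ^ 2 * n := by
      push_cast
      ring
    calc _ ≤ ((40 * (Nat.log 2 n + 4 + 1) ^ 2 * n : ℕ) : ℝ) := by exact_mod_cast hsize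
      _ = 40 * ((Nat.log 2 n : ℝ) + 5) ^ 2 * n := hcast
      _ ≤ 40 * (6 * x) ^ 2 * n := by
          gcongr
          linarith
      _ = 1440 * n * x ^ 2 := by ring
      _ ≤ 1440 * n * x ^ 3 := by
          gcongr
          norm_num
end

section
/- For every integer k ≥ 1 there exists a constant C_k > 0 such that for all n ≥ 2 the following holds. Let a_1, …, a_k ∈ ℝ^d be fixed vectors, and let P be a family of n nonempty sets in ℝ^d, each of the form ⋂_{i=1}^{k} {x ∈ ℝ^d : ⟨a_i, x⟩ ≤ c_i} for some reals c_1, …, c_k (i.e., each set is a polytope cut out by translates of the k fixed halfspaces). Then the intersection graph of P admits a biclique cover of size at most C_k · n · (log₂ n)^k. -/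
/-! ### Bipartite covers of relations -/

/-- The number of vertices, counted with multiplicity, used by a list of bicliques. -/
def listSize {V : Type*} (L : List (Finset V × Finset V)) : ℕ :=
  (L.map fun b => b.1.card + b.2.card).sum

/-- The pairs in `X × Y` related by `R` are exactly those covered by a list of products
`X' × Y' ⊆ X × Y` of total size at most `s`. The two sides of a product may overlap. -/
def HasCover {V : Type*} (R : V → V → Prop) (X Y : Finset V) (s : ℕ) : Prop :=
  ∃ L : List (Finset V × Finset V),
    (∀ b ∈ L, b.1 ⊆ X ∧ b.2 ⊆ Y ∧ ∀ u ∈ b.1, ∀ v ∈ b.2, R u v) ∧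
    (∀ u ∈ X, ∀ v ∈ Y, R u v → ∃ b ∈ L, u ∈ b.1 ∧ v ∈ b.2) ∧
    listSize L ≤ s

lemma listSize_flatMap {V ι : Type*} (l : List ι) (f : ι → List (Finset V × Finset V)) :
    listSize (l.flatMap f) = (l.map fun i => listSize (f i)).sum := by
  induction l with
  | nil => simp [listSize]
  | cons a l ih =>
    simp only [listSize, List.flatMap_cons, List.map_append, List.sum_append, List.map_cons,
      List.sum_cons] at ih ⊢
    rw [ih]

namespace HasCover

variable {V : Type*} {R R' : V → V → Prop} {X Y : Finset V} {s t : ℕ}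

lemma mono (h : HasCover R X Y s) (hst : s ≤ t) : HasCover R X Y t := by
  obtain ⟨L, h1, h2, h3⟩ := h
  exact ⟨L, h1, h2, h3.trans hst⟩

lemma congr (h : HasCover R X Y s) (hR : ∀ u ∈ X, ∀ v ∈ Y, (R u v ↔ R' u v)) :
    HasCover R' X Y s := by
  obtain ⟨L, h1, h2, h3⟩ := h
  refine ⟨L, fun b hb => ⟨(h1 b hb).1, (h1 b hb).2.1, fun u hu v hv => ?_⟩,
    fun u hu v hv huv => h2 u hu v hv ((hR u hu v hv).2 huv), h3⟩
  exact (hR u ((h1 b hb).1 hu) v ((h1 b hb).2.1 hv)).1 ((h1 b hb).2.2 u hu v hv)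

lemma of_forall_not (h : ∀ u ∈ X, ∀ v ∈ Y, ¬ R u v) : HasCover R X Y s :=
  ⟨[], by simp, fun u hu v hv huv => (h u hu v hv huv).elim, by simp [listSize]⟩

lemma swap (h : HasCover R X Y s) : HasCover (fun u v => R v u) Y X s := by
  obtain ⟨L, h1, h2, h3⟩ := h
  refine ⟨L.map Prod.swap, ?_, ?_, ?_⟩
  · intro b hb
    obtain ⟨b', hb', rfl⟩ := List.mem_map.1 hb
    exact ⟨(h1 b' hb').2.1, (h1 b' hb').1, fun u hu v hv => (h1 b' hb').2.2 v hv u hu⟩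
  · intro u hu v hv huv
    obtain ⟨b, hb, hb1, hb2⟩ := h2 v hv u hu huv
    exact ⟨b.swap, List.mem_map_of_mem hb, hb2, hb1⟩
  · refine le_trans (le_of_eq ?_) h3
    unfold listSize
    rw [List.map_map]
    congr 1
    refine List.map_congr_left fun b _ => ?_
    simp [add_comm]

lemma or (h : HasCover R X Y s) (h' : HasCover R' X Y t) :
    HasCover (fun u v => R u v ∨ R' u v) X Y (s + t) := by
  obtain ⟨L, h1, h2, h3⟩ := h
  obtain ⟨L', h1', h2', h3'⟩ := h'
  refine ⟨L ++ L', ?_, ?_, ?_⟩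
  · intro b hb
    rcases List.mem_append.1 hb with hb | hb
    · exact ⟨(h1 b hb).1, (h1 b hb).2.1, fun u hu v hv => Or.inl ((h1 b hb).2.2 u hu v hv)⟩
    · exact ⟨(h1' b hb).1, (h1' b hb).2.1, fun u hu v hv => Or.inr ((h1' b hb).2.2 u hu v hv)⟩
  · rintro u hu v hv (huv | huv)
    · obtain ⟨b, hb, hb'⟩ := h2 u hu v hv huv
      exact ⟨b, List.mem_append_left _ hb, hb'⟩
    · obtain ⟨b, hb, hb'⟩ := h2' u hu v hv huv
      exact ⟨b, List.mem_append_right _ hb, hb'⟩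
  · simp only [listSize, List.map_append, List.sum_append] at *
    omega

lemma exists_index {ι : Type*} [Fintype ι] {R : ι → V → V → Prop}
    (h : ∀ i, HasCover (R i) X Y s) :
    HasCover (fun u v => ∃ i, R i u v) X Y (Fintype.card ι * s) := by
  choose L h1 h2 h3 using h
  refine ⟨(Finset.univ : Finset ι).toList.flatMap L, ?_, ?_, ?_⟩
  · intro b hb
    obtain ⟨i, -, hb⟩ := List.mem_flatMap.1 hb
    exact ⟨(h1 i b hb).1, (h1 i b hb).2.1, fun u hu v hv => ⟨i, (h1 i b hb).2.2 u hu v hv⟩⟩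
  · rintro u hu v hv ⟨i, huv⟩
    obtain ⟨b, hb, hb'⟩ := h2 i u hu v hv huv
    exact ⟨b, List.mem_flatMap.2 ⟨i, by simp, hb⟩, hb'⟩
  · rw [listSize_flatMap, Finset.sum_map_toList]
    calc _ ≤ ∑ _i : ι, s := Finset.sum_le_sum fun i _ => h3 i
      _ = _ := by simp

/-- If `R` has a cover of size `s`, and `R'` costs at most `t` per vertex on every product on which
`R` holds throughout, then refining the cover of `R` covers the conjunction with size `t * s`. -/
lemma and_of_complete
    (h : HasCover R X Y s)
    (h' : ∀ X' Y' : Finset V, (∀ u ∈ X', ∀ v ∈ Y', R u v) →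
      HasCover R' X' Y' (t * (X'.card + Y'.card))) :
    HasCover (fun u v => R u v ∧ R' u v) X Y (t * s) := by
  obtain ⟨L, h1, h2, h3⟩ := h
  have key : ∀ b : Finset V × Finset V, ∃ L' : List (Finset V × Finset V), b ∈ L →
      (∀ b' ∈ L', b'.1 ⊆ b.1 ∧ b'.2 ⊆ b.2 ∧ ∀ u ∈ b'.1, ∀ v ∈ b'.2, R' u v) ∧
      (∀ u ∈ b.1, ∀ v ∈ b.2, R' u v → ∃ b' ∈ L', u ∈ b'.1 ∧ v ∈ b'.2) ∧
      listSize L' ≤ t * (b.1.card + b.2.card) := by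
    intro b
    by_cases hb : b ∈ L
    · obtain ⟨L', hL'⟩ := h' b.1 b.2 (h1 b hb).2.2
      exact ⟨L', fun _ => hL'⟩
    · exact ⟨[], fun h => (hb h).elim⟩
  choose F hF using key
  refine ⟨L.flatMap F, ?_, ?_, ?_⟩
  · intro b' hb'
    obtain ⟨b, hb, hb'⟩ := List.mem_flatMap.1 hb'
    obtain ⟨g1, g2, g3⟩ := (hF b hb).1 b' hb'
    obtain ⟨f1, f2, f3⟩ := h1 b hb
    exact ⟨g1.trans f1, g2.trans f2, fun u hu v hv => ⟨f3 u (g1 hu) v (g2 hv), g3 u hu v hv⟩⟩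
  · rintro u hu v hv ⟨huv, huv'⟩
    obtain ⟨b, hb, hb1, hb2⟩ := h2 u hu v hv huv
    obtain ⟨b', hb', hb''⟩ := (hF b hb).2.1 u hb1 v hb2 huv'
    exact ⟨b', List.mem_flatMap.2 ⟨b, hb, hb'⟩, hb''⟩
  · rw [listSize_flatMap]
    calc _ ≤ (L.map fun b => t * (b.1.card + b.2.card)).sum :=
          List.sum_le_sum fun b hb => (hF b hb).2.2
      _ = t * listSize L := by rw [List.sum_map_mul_left]; rfl
      _ ≤ t * s := Nat.mul_le_mul_left _ h3

end HasCover

/-! ### Stabbing intervals -/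

/-- At each level `e` of a segment tree, at most two dyadic cells `[i 2^e, (i + 1) 2^e)` are
canonical for `[β, τ)`, that is, contained in it while their parent cell is not. -/
lemma card_canonical_le_two (e N β τ : ℕ) :
    ((Finset.range N).filter fun i => (β ≤ i * 2 ^ e ∧ (i + 1) * 2 ^ e ≤ τ) ∧
      ¬ (β ≤ i / 2 * 2 ^ (e + 1) ∧ (i / 2 + 1) * 2 ^ (e + 1) ≤ τ)).card ≤ 2 := by
  by_contra hcon
  rw [not_le] at hcon
  set s := (Finset.range N).filter fun i => (β ≤ i * 2 ^ e ∧ (i + 1) * 2 ^ e ≤ τ) ∧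
      ¬ (β ≤ i / 2 * 2 ^ (e + 1) ∧ (i / 2 + 1) * 2 ^ (e + 1) ≤ τ) with hs
  -- the middle one of three canonical indices has its sibling between the outer two
  have mid : ∀ i ∈ s, ∀ j ∈ s, ∀ l ∈ s, i < j → j < l → False := by
    intro i hi j hj l hl hij hjl
    simp only [hs, Finset.mem_filter] at hi hj hl
    apply hj.2.2
    have hp : 2 ^ (e + 1) = 2 * 2 ^ e := by ring
    constructor
    · refine hi.2.1.1.trans ?_
      rw [hp, ← mul_assoc]
      exact Nat.mul_le_mul_right _ (by omega)
    · refine le_trans ?_ hl.2.1.2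
      rw [hp, ← mul_assoc]
      exact Nat.mul_le_mul_right _ (by omega)
  obtain ⟨a, b, c, ha, hb, hc, hab, hac, hbc⟩ := Finset.two_lt_card_iff.1 hcon
  rcases lt_or_gt_of_ne hab with h1 | h1 <;> rcases lt_or_gt_of_ne hac with h2 | h2 <;>
    rcases lt_or_gt_of_ne hbc with h3 | h3
  all_goals first
    | exact mid a ha b hb c hc h1 h3
    | exact mid a ha c hc b hb h2 h3
    | exact mid b hb a ha c hc h1 h2
    | exact mid b hb c hc a ha h3 h2
    | exact mid c hc a ha b hb h2 h1
    | exact mid c hc b hb a ha h3 h1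

/-- Segment tree: each point lies in one dyadic cell per level, each interval has at most two
canonical cells per level, and a point lies in an interval iff they share a canonical cell. -/
lemma hasCover_stab_nat {V : Type*} (X Y : Finset V) (ρ β τ : V → ℕ) (K : ℕ)
    (hτ : ∀ v, τ v ≤ 2 ^ K) :
    HasCover (fun u v => β v ≤ ρ u ∧ ρ u < τ v) X Y (2 * (K + 1) * (X.card + Y.card)) := by
  classical
  let cov : ℕ → ℕ → V → Prop := fun e i v => β v ≤ i * 2 ^ e ∧ (i + 1) * 2 ^ e ≤ τ v
  let A : ℕ × ℕ → Finset V := fun q => X.filter fun u => ρ u / 2 ^ q.1 = q.2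
  let B : ℕ × ℕ → Finset V := fun q => Y.filter fun v =>
    cov q.1 q.2 v ∧ ¬ cov (q.1 + 1) (q.2 / 2) v
  let I := Finset.range (K + 1) ×ˢ Finset.range (2 ^ K)
  refine ⟨I.toList.map fun q => (A q, B q), ?_, ?_, ?_⟩
  · intro b hb
    obtain ⟨q, -, rfl⟩ := List.mem_map.1 hb
    refine ⟨Finset.filter_subset _ _, Finset.filter_subset _ _, fun u hu v hv => ?_⟩
    simp only [A, B, cov, Finset.mem_filter] at hu hv
    obtain ⟨-, hu⟩ := hu
    obtain ⟨-, ⟨h1, h2⟩, -⟩ := hv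
    have hpos : 0 < 2 ^ q.1 := by positivity
    rw [← hu] at h1 h2
    exact ⟨h1.trans (Nat.div_mul_le_self _ _),
      lt_of_lt_of_le (by rw [add_mul, one_mul]; exact Nat.lt_div_mul_add hpos) h2⟩
  · rintro u hu v hv ⟨h1, h2⟩
    -- the cells containing `ρ u` grow with the level; the last one inside `[β v, τ v)` is canonical
    have hex : ∃ e, ¬ cov e (ρ u / 2 ^ e) v := by
      refine ⟨K + 1, fun h => ?_⟩
      have h3 := h.2.trans (hτ v)
      have : 2 ^ K < 2 ^ (K + 1) := Nat.pow_lt_pow_right (by norm_num) (by omega)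
      nlinarith [Nat.zero_le (ρ u / 2 ^ (K + 1) * 2 ^ (K + 1))]
    have hle : Nat.find hex ≤ K + 1 := by
      refine Nat.find_min' hex fun h => ?_
      have h3 := h.2.trans (hτ v)
      have : 2 ^ K < 2 ^ (K + 1) := Nat.pow_lt_pow_right (by norm_num) (by omega)
      nlinarith [Nat.zero_le (ρ u / 2 ^ (K + 1) * 2 ^ (K + 1))]
    have hne : Nat.find hex ≠ 0 := by
      intro h
      have := Nat.find_spec hex
      rw [h] at this
      exact this (by simp only [cov, pow_zero, Nat.div_one, mul_one]; omega)
    obtain ⟨e, he⟩ := Nat.exists_eq_succ_of_ne_zero hne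
    have hcov : cov e (ρ u / 2 ^ e) v := by
      by_contra h
      have := Nat.find_min' hex h
      omega
    have hncov : ¬ cov (e + 1) (ρ u / 2 ^ e / 2) v := by
      have := Nat.find_spec hex
      rw [he] at this
      rwa [Nat.div_div_eq_div_mul, ← pow_succ]
    refine ⟨_, List.mem_map.2 ⟨(e, ρ u / 2 ^ e), ?_, rfl⟩, ?_, ?_⟩
    · simp only [I, Finset.mem_toList, Finset.mem_product, Finset.mem_range]
      exact ⟨by omega, (Nat.div_le_self _ _).trans_lt (h2.trans_le (hτ v))⟩
    · simp [A, hu]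
    · simp only [B, Finset.mem_filter]
      exact ⟨hv, hcov, hncov⟩
  · have hA : ∀ e, ∑ i ∈ Finset.range (2 ^ K), (A (e, i)).card ≤ X.card := by
      intro e
      rw [← Finset.card_biUnion]
      · exact Finset.card_le_card (Finset.biUnion_subset.2 fun i _ => Finset.filter_subset _ _)
      · intro i _ j _ hij
        refine Finset.disjoint_left.2 fun u hu hu' => hij ?_
        simp only [A, Finset.mem_filter] at hu hu'
        exact hu.2.symm.trans hu'.2
    have hB : ∀ e, ∑ i ∈ Finset.range (2 ^ K), (B (e, i)).card ≤ 2 * Y.card := by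
      intro e
      simp only [B, Finset.card_filter]
      rw [Finset.sum_comm]
      calc _ ≤ ∑ _v ∈ Y, 2 := by
            refine Finset.sum_le_sum fun v _ => ?_
            rw [← Finset.card_filter]
            exact card_canonical_le_two e (2 ^ K) (β v) (τ v)
        _ = 2 * Y.card := by simp [mul_comm]
    unfold listSize
    rw [List.map_map]
    have : (I.toList.map ((fun b : Finset V × Finset V => b.1.card + b.2.card) ∘
        fun q => (A q, B q))).sum = ∑ q ∈ I, ((A q).card + (B q).card) :=
      Finset.sum_map_toList _ _
    rw [this, Finset.sum_product]
    calc _ ≤ ∑ _e ∈ Finset.range (K + 1), 2 * (X.card + Y.card) := by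
          refine Finset.sum_le_sum fun e _ => ?_
          rw [Finset.sum_add_distrib]
          have := hA e
          have := hB e
          omega
      _ = _ := by simp; ring

/-- The incidences between reals and closed intervals, reduced to natural numbers by passing to
ranks among the points of `X`. -/
lemma hasCover_stab {V : Type*} (X Y : Finset V) (x b t : V → ℝ) (K : ℕ)
    (hX : X.card ≤ 2 ^ K) :
    HasCover (fun u v => b v ≤ x u ∧ x u ≤ t v) X Y (2 * (K + 1) * (X.card + Y.card)) := by
  classical
  refine (hasCover_stab_nat X Y (fun u => (X.filter fun w => x w < x u).card)
    (fun v => (X.filter fun w => x w < b v).card)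
    (fun v => (X.filter fun w => x w ≤ t v).card) K
    (fun v => (Finset.card_filter_le _ _).trans hX)).congr fun u hu v _ => ?_
  refine and_congr ⟨fun h => ?_, fun h => ?_⟩ ⟨fun h => ?_, fun h => ?_⟩
  · by_contra! hlt
    refine absurd h (not_le.2 (Finset.card_lt_card ?_))
    refine ⟨fun w hw => ?_, fun hsub => ?_⟩
    · simp only [Finset.mem_filter] at hw ⊢
      exact ⟨hw.1, hw.2.trans hlt⟩
    · have := hsub (Finset.mem_filter.2 ⟨hu, hlt⟩)
      simp at this
  · refine Finset.card_le_card fun w hw => ?_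
    simp only [Finset.mem_filter] at hw ⊢
    exact ⟨hw.1, hw.2.trans_le h⟩
  · by_contra! hlt
    refine absurd h (not_lt.2 (Finset.card_le_card fun w hw => ?_))
    simp only [Finset.mem_filter] at hw ⊢
    exact ⟨hw.1, hw.2.trans_lt hlt⟩
  · refine Finset.card_lt_card ⟨fun w hw => ?_, fun hsub => ?_⟩
    · simp only [Finset.mem_filter] at hw ⊢
      exact ⟨hw.1, hw.2.le.trans h⟩
    · have := hsub (Finset.mem_filter.2 ⟨hu, h⟩)
      simp at this

/-- Two intervals meet iff one of them contains the left endpoint of the other. -/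
lemma hasCover_interval {V : Type*} (X Y : Finset V) (l h b t : V → ℝ) (K : ℕ)
    (hX : X.card ≤ 2 ^ K) (hY : Y.card ≤ 2 ^ K) (hlh : ∀ u ∈ X, l u ≤ h u)
    (hbt : ∀ v ∈ Y, b v ≤ t v) :
    HasCover (fun u v => b v ≤ h u ∧ l u ≤ t v) X Y (4 * (K + 1) * (X.card + Y.card)) := by
  refine (((hasCover_stab X Y l b t K hX).or (hasCover_stab Y X b l h K hY).swap).congr
    fun u hu v hv => ?_).mono (by ring_nf; rfl)
  have h1 := hlh u hu
  have h2 := hbt v hv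
  constructor
  · rintro (⟨h3, h4⟩ | ⟨h3, h4⟩)
    · exact ⟨h3.trans h1, h4⟩
    · exact ⟨h4, h3.trans h2⟩
  · rintro ⟨h3, h4⟩
    rcases le_total (b v) (l u) with h5 | h5
    · exact Or.inl ⟨h5, h4⟩
    · exact Or.inr ⟨h5, h3⟩

/-! ### Systems of linear comparisons -/

/-- A two-sided comparison whose bounds are in order for all pairs in `X × Y` costs one logarithm:
with `w` minimizing `f - g` on `X`, it says that the intervals `[z u + g u, z u + f u - (f w - g w)]`
and `[b v - (f w - g w), t v]` meet, and neither of these is empty. -/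
lemma hasCover_two_bounds {V : Type*} (X Y : Finset V) (z f g : V → ℝ) (b t : V → ℝ) (K : ℕ)
    (hX : X.card ≤ 2 ^ K) (hY : Y.card ≤ 2 ^ K)
    (hcompat : ∀ u ∈ X, ∀ v ∈ Y, b v - f u ≤ t v - g u) :
    HasCover (fun u v => b v - f u ≤ z u ∧ z u ≤ t v - g u) X Y
      (4 * (K + 1) * (X.card + Y.card)) := by
  rcases X.eq_empty_or_nonempty with rfl | hne
  · exact HasCover.of_forall_not (by simp)
  obtain ⟨w, hw, hmin⟩ := X.exists_min_image (fun u => f u - g u) hne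
  refine (hasCover_interval X Y (fun u => z u + g u) (fun u => z u + f u - (f w - g w))
    (fun v => b v - (f w - g w)) t K hX hY (fun u hu => ?_) (fun v hv => ?_)).congr
    fun u _ v _ => ?_
  · have := hmin u hu
    linarith
  · have := hcompat w hw v hv
    linarith
  · constructor <;> rintro ⟨h1, h2⟩ <;> constructor <;> linarith

/-- A fixed number of linear comparisons between points of `ℝ^r` and arbitrary thresholds costs `r`
logarithms, however many comparisons there are; their number affects the constant only. -/
lemma hasCover_linear (r : ℕ) : ∀ (J : Type) [Fintype J], ∃ C : ℕ,
    ∀ (V : Type) [Fintype V] (K : ℕ), Fintype.card V ≤ 2 ^ K →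
    ∀ (φ : J → Fin r → ℝ) (p : V → Fin r → ℝ) (y : V → J → ℝ) (X Y : Finset V),
      HasCover (fun u v => ∀ j, ∑ i, φ j i * p u i ≤ y v j) X Y
        (C * (K + 1) ^ r * (X.card + Y.card)) := by
  classical
  induction r with
  | zero =>
    intro J _
    refine ⟨1, fun V _ K _ φ p y X Y => ?_⟩
    refine ⟨[(X, Y.filter fun v => ∀ j, 0 ≤ y v j)], ?_, ?_, ?_⟩
    · simp
    · intro u hu v hv h
      exact ⟨_, List.mem_singleton_self _, hu, Finset.mem_filter.2 ⟨hv, by simpa using h⟩⟩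
    · simp [listSize, Finset.card_filter_le]
  | succ r ih =>
    intro J _
    obtain ⟨C, hC⟩ := ih (Option (J ⊕ Bool))
    refine ⟨Fintype.card ((J ⊕ Bool) × (J ⊕ Bool)) * (4 * C), fun V _ K hV φ p y X Y => ?_⟩
    have hcard : ∀ Z : Finset V, Z.card ≤ 2 ^ K := fun Z => (Finset.card_le_univ Z).trans hV
    -- `M` bounds the eliminated coordinate, so that the two added comparisons always hold
    obtain ⟨M, hM⟩ : ∃ M : ℝ, ∀ u, |p u 0| ≤ M := by
      obtain ⟨M, hM⟩ := (Set.finite_range fun u => |p u 0|).bddAbove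
      exact ⟨M, fun u => hM ⟨u, rfl⟩⟩
    let α : J ⊕ Bool → ℝ := Sum.elim (fun j => φ j 0) (fun s => if s then 1 else -1)
    let ψ : J ⊕ Bool → Fin r → ℝ := Sum.elim (fun j i => φ j i.succ) (fun _ _ => 0)
    let y' : V → J ⊕ Bool → ℝ := fun v => Sum.elim (y v) (fun _ => M)
    let S : J ⊕ Bool → V → ℝ := fun j u => ∑ i, ψ j i * p u i.succ
    have hsys : ∀ u v, (∀ j, ∑ i, φ j i * p u i ≤ y v j) ↔
        ∀ j, α j * p u 0 + S j u ≤ y' v j := by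
      intro u v
      have h := abs_le.1 (hM u)
      simp only [Sum.forall, α, S, ψ, y', Sum.elim_inl, Sum.elim_inr, Fin.sum_univ_succ,
        Bool.forall_bool]
      constructor
      · intro hj
        refine ⟨hj, ?_, ?_⟩ <;> simp <;> linarith [h.1, h.2]
      · exact fun hj => hj.1
    -- the comparisons saying that `i` gives the least upper bound on the coordinate `0`,
    -- that `j` gives the greatest lower bound, and that these bounds are compatible
    let row : J ⊕ Bool → J ⊕ Bool → Option (J ⊕ Bool) → Fin r → ℝ := fun i j o c =>
      match o with
      | none => ψ i c / α i - ψ j c / α j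
      | some l => if α l = 0 then ψ l c else if 0 < α l then ψ l c / α l - ψ i c / α i
          else ψ j c / α j - ψ l c / α l
    let thr : J ⊕ Bool → J ⊕ Bool → V → Option (J ⊕ Bool) → ℝ := fun i j v o =>
      match o with
      | none => y' v i / α i - y' v j / α j
      | some l => if α l = 0 then y' v l else if 0 < α l then y' v l / α l - y' v i / α i
          else y' v j / α j - y' v l / α l
    let T : J ⊕ Bool → J ⊕ Bool → V → V → Prop := fun i j u v =>
      ∀ o, ∑ c, row i j o c * p u c.succ ≤ thr i j v o
    have hT : ∀ i j u v, T i j u v ↔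
        (y' v j / α j - S j u / α j ≤ y' v i / α i - S i u / α i) ∧
        ∀ l, (α l = 0 → S l u ≤ y' v l) ∧
          (0 < α l → y' v i / α i - S i u / α i ≤ y' v l / α l - S l u / α l) ∧
          (α l < 0 → y' v l / α l - S l u / α l ≤ y' v j / α j - S j u / α j) := by
      intro i j u v
      have hdiff : ∀ l m, ∑ c, (ψ l c / α l - ψ m c / α m) * p u c.succ =
          S l u / α l - S m u / α m := by
        intro l m
        simp only [S, Finset.sum_div, ← Finset.sum_sub_distrib]
        exact Finset.sum_congr rfl fun c _ => by ring
      simp only [T, Option.forall, row, thr, hdiff]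
      refine and_congr ⟨fun h => by linarith, fun h => by linarith⟩
        (forall_congr' fun l => ?_)
      rcases lt_trichotomy (α l) 0 with h | h | h
      · simp only [h.ne, h, not_lt.2 h.le, if_false, hdiff, false_imp_iff, true_and,
          true_imp_iff]
        constructor <;> intro h <;> linarith
      · simp [h, S]
      · simp only [h.ne', h, not_lt.2 h.le, if_false, if_true, hdiff, false_imp_iff, true_and,
          true_imp_iff, and_true]
        constructor <;> intro h <;> linarith
    have hup : ∀ l u v, 0 < α l → (α l * p u 0 + S l u ≤ y' v l ↔
        p u 0 ≤ y' v l / α l - S l u / α l) := by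
      intro l u v h
      rw [← sub_div, le_div_iff₀ h]
      constructor <;> intro h <;> linarith
    have hlo : ∀ l u v, α l < 0 → (α l * p u 0 + S l u ≤ y' v l ↔
        y' v l / α l - S l u / α l ≤ p u 0) := by
      intro l u v h
      rw [← sub_div, div_le_iff_of_neg h]
      constructor <;> intro h <;> linarith
    have hequiv : ∀ u v, (∀ j, ∑ i, φ j i * p u i ≤ y v j) ↔
        ∃ q : (J ⊕ Bool) × (J ⊕ Bool), (0 < α q.1 ∧ α q.2 < 0) ∧ T q.1 q.2 u v ∧
          (y' v q.2 / α q.2 - S q.2 u / α q.2 ≤ p u 0 ∧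
            p u 0 ≤ y' v q.1 / α q.1 - S q.1 u / α q.1) := by
      intro u v
      rw [hsys]
      constructor
      · intro h
        obtain ⟨i, hi, himin⟩ := (Finset.univ.filter fun l => 0 < α l).exists_min_image
          (fun l => y' v l / α l - S l u / α l) ⟨Sum.inr true, by simp [α]⟩
        obtain ⟨j, hj, hjmax⟩ := (Finset.univ.filter fun l => α l < 0).exists_max_image
          (fun l => y' v l / α l - S l u / α l) ⟨Sum.inr false, by simp [α]⟩
        simp only [Finset.mem_filter, Finset.mem_univ, true_and] at hi hj himin hjmax
        have h1 := (hup i u v hi).1 (h i)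
        have h2 := (hlo j u v hj).1 (h j)
        refine ⟨(i, j), ⟨hi, hj⟩, (hT i j u v).2 ⟨h2.trans h1, fun l => ⟨fun hl => ?_,
          himin l, hjmax l⟩⟩, h2, h1⟩
        simpa [hl] using h l
      · rintro ⟨⟨i, j⟩, ⟨hi, hj⟩, hTij, h2, h1⟩ l
        obtain ⟨h3, h4, h5⟩ := ((hT i j u v).1 hTij).2 l
        rcases lt_trichotomy (α l) 0 with h | h | h
        · exact (hlo l u v h).2 ((h5 h).trans h2)
        · simpa [h] using h3 h
        · exact (hup l u v h).2 (h1.trans (h4 h))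
    refine ((HasCover.exists_index (s := 4 * (K + 1) * (C * (K + 1) ^ r * (X.card + Y.card)))
      fun q => ?_).congr fun u _ v _ => (hequiv u v).symm).mono (by ring_nf; rfl)
    by_cases hq : 0 < α q.1 ∧ α q.2 < 0
    · simp only [hq, true_and, and_self]
      refine HasCover.and_of_complete
        (hC V K hV (row q.1 q.2) (fun u c => p u c.succ) (thr q.1 q.2) X Y) fun X' Y' hXY => ?_
      exact hasCover_two_bounds X' Y' (fun u => p u 0) (fun u => S q.2 u / α q.2)
        (fun u => S q.1 u / α q.1) (fun v => y' v q.2 / α q.2) (fun v => y' v q.1 / α q.1) K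
        (hcard X') (hcard Y') fun u hu v hv => ((hT q.1 q.2 u v).1 (hXY u hu v hv)).1
    · exact HasCover.of_forall_not fun u _ v _ h => hq h.1

/-! ### Fourier–Motzkin elimination -/

/-- Elimination of a single variable. -/
lemma exists_forall_mul_le_iff {ι : Type*} [Fintype ι] (α β : ι → ℝ) :
    (∃ x : ℝ, ∀ i, α i * x ≤ β i) ↔
      (∀ i, α i = 0 → 0 ≤ β i) ∧ ∀ i j, 0 < α i → α j < 0 → 0 ≤ α i * β j - α j * β i := by
  classical
  constructor
  · rintro ⟨x, hx⟩
    refine ⟨fun i hi => by simpa [hi] using hx i, fun i j hi hj => ?_⟩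
    nlinarith [mul_le_mul_of_nonneg_left (hx j) hi.le,
      mul_le_mul_of_nonneg_left (hx i) (neg_nonneg.2 hj.le)]
  · rintro ⟨h0, h1⟩
    have hcmp : ∀ i j, 0 < α i → α j < 0 → β j / α j ≤ β i / α i := by
      intro i j hi hj
      rw [div_le_iff_of_neg hj, div_mul_eq_mul_div, div_le_iff₀ hi]
      nlinarith [h1 i j hi hj]
    obtain ⟨x, hx1, hx2⟩ : ∃ x : ℝ, (∀ i, 0 < α i → x ≤ β i / α i) ∧
        ∀ j, α j < 0 → β j / α j ≤ x := by
      by_cases hneg : (Finset.univ.filter fun l => α l < 0).Nonempty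
      · obtain ⟨j, hj, hjmax⟩ := Finset.exists_max_image _ (fun l => β l / α l) hneg
        simp only [Finset.mem_filter, Finset.mem_univ, true_and] at hj hjmax
        exact ⟨β j / α j, fun i hi => hcmp i j hi hj, hjmax⟩
      · obtain ⟨m, hm⟩ := (Set.finite_range fun l => β l / α l).bddBelow
        refine ⟨m, fun i _ => hm ⟨i, rfl⟩, fun j hj => (hneg ⟨j, ?_⟩).elim⟩
        simpa using hj
    refine ⟨x, fun i => ?_⟩
    rcases lt_trichotomy (α i) 0 with h | h | h
    · have := (div_le_iff_of_neg h).1 (hx2 i h)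
      linarith
    · simpa [h] using h0 i h
    · have := (le_div_iff₀ h).1 (hx1 i h)
      linarith

/-- Fourier–Motzkin elimination: feasibility of a system is equivalent to linear conditions on its
right-hand side, whose number `N` depends only on the numbers of variables and of inequalities. -/
lemma exists_elimination (d : ℕ) : ∀ (ι : Type) [Fintype ι], ∃ N : ℕ, ∀ a : ι → Fin d → ℝ,
    ∃ Λ : Fin N → ι → ℝ, ∀ b : ι → ℝ,
      (∃ x : Fin d → ℝ, ∀ i, ∑ j, a i j * x j ≤ b i) ↔ ∀ κ, 0 ≤ ∑ i, Λ κ i * b i := by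
  classical
  induction d with
  | zero =>
    intro ι _
    refine ⟨Fintype.card ι, fun a => ⟨fun κ i => if (Fintype.equivFin ι).symm κ = i then 1 else 0,
      fun b => ?_⟩⟩
    simp only [Finset.univ_eq_empty, Finset.sum_empty, exists_const, ite_mul, one_mul, zero_mul,
      Finset.sum_ite_eq, Finset.mem_univ, if_true]
    exact ⟨fun h κ => h _, fun h i => by simpa using h (Fintype.equivFin ι i)⟩
  | succ d ih =>
    intro ι _
    obtain ⟨N, hN⟩ := ih (ι ⊕ ι × ι)
    refine ⟨N, fun a => ?_⟩
    -- the nonnegative combinations of rows in which the coefficient of `x 0` vanishes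
    let comb : ι ⊕ ι × ι → (ι → ℝ) → ℝ := Sum.elim
      (fun i c => if a i 0 = 0 then c i else 0)
      (fun q c => if 0 < a q.1 0 ∧ a q.2 0 < 0 then a q.1 0 * c q.2 - a q.2 0 * c q.1 else 0)
    have hadd : ∀ κ c c', comb κ (c - c') = comb κ c - comb κ c' := by
      rintro (i | q) c c' <;> simp only [comb, Sum.elim_inl, Sum.elim_inr, Pi.sub_apply] <;>
        split_ifs <;> ring
    have hlin : ∀ κ (m : ℕ) (c : ι → Fin m → ℝ) (x : Fin m → ℝ),
        comb κ (fun i => ∑ j, c i j * x j) = ∑ j, comb κ (fun i => c i j) * x j := by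
      rintro (i | q) m c x <;> simp only [comb, Sum.elim_inl, Sum.elim_inr] <;>
        split_ifs <;> simp [Finset.mul_sum, ← Finset.sum_sub_distrib]
      exact Finset.sum_congr rfl fun j _ => by ring
    obtain ⟨Λ, hΛ⟩ := hN fun κ j => comb κ fun i => a i j.succ
    refine ⟨fun κ i => ∑ l, Λ κ l * comb l (Pi.single i 1), fun b => ?_⟩
    have hb : ∀ l, comb l b = ∑ i, comb l (Pi.single i 1) * b i := by
      rintro (i | q) <;> simp only [comb, Sum.elim_inl, Sum.elim_inr] <;>
        split_ifs <;>
        simp [Pi.single_apply, sub_mul, Finset.sum_sub_distrib]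
    have hR : (∀ κ, 0 ≤ ∑ l, Λ κ l * comb l b) ↔
        ∀ κ, 0 ≤ ∑ i, (∑ l, Λ κ l * comb l (Pi.single i 1)) * b i := by
      refine forall_congr' fun κ => ?_
      simp only [hb, Finset.sum_mul, Finset.mul_sum]
      rw [Finset.sum_comm]
      simp only [mul_assoc]
    rw [← hR, ← hΛ fun l => comb l b]
    have hstep : ∀ x : Fin d → ℝ, (∃ x0 : ℝ, ∀ i, a i 0 * x0 ≤ b i - ∑ j, a i j.succ * x j) ↔
        ∀ κ, ∑ j, comb κ (fun i => a i j.succ) * x j ≤ comb κ b := by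
      intro x
      rw [exists_forall_mul_le_iff]
      simp only [← hlin]
      rw [← forall_congr' fun κ => sub_nonneg]
      simp only [← hadd, Sum.forall, comb, Sum.elim_inl, Sum.elim_inr, Pi.sub_apply, Prod.forall]
      refine and_congr (forall_congr' fun i => ?_) (forall_congr' fun i => forall_congr' fun j => ?_)
      · split_ifs with h <;> simp [h]
      · split_ifs with h
        · simp [h]
        · simp only [le_refl, iff_true]
          exact fun h1 h2 => (h ⟨h1, h2⟩).elim
    constructor
    · rintro ⟨x, hx⟩
      refine ⟨fun j => x j.succ, (hstep _).1 ⟨x 0, fun i => ?_⟩⟩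
      have := hx i
      rw [Fin.sum_univ_succ] at this
      linarith
    · rintro ⟨x, hx⟩
      obtain ⟨x0, hx0⟩ := (hstep x).2 hx
      refine ⟨Fin.cons x0 x, fun i => ?_⟩
      rw [Fin.sum_univ_succ]
      simp only [Fin.cons_zero, Fin.cons_succ]
      linarith [hx0 i]

/-- Elimination with a number of conditions independent of the number `d` of variables: the set of
feasible right-hand sides depends only on the range of `x ↦ (⟨a i, x⟩)ᵢ`, which is also the range of
a linear endomorphism `π` of `ℝ^k`. -/
lemma exists_feasibility_test (k : ℕ) : ∃ N : ℕ, ∀ (d : ℕ) (a : Fin k → Fin d → ℝ),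
    ∃ Λ : Fin N → Fin k → ℝ, ∀ b : Fin k → ℝ,
      (∃ x : Fin d → ℝ, ∀ i, ∑ j, a i j * x j ≤ b i) ↔ ∀ κ, 0 ≤ ∑ i, Λ κ i * b i := by
  obtain ⟨N, hN⟩ := exists_elimination k (Fin k)
  refine ⟨N, fun d a => ?_⟩
  let W := LinearMap.range (Matrix.mulVecLin (Matrix.of a))
  obtain ⟨g, hg⟩ := W.subtype.exists_leftInverse_of_injective W.ker_subtype
  let π : (Fin k → ℝ) →ₗ[ℝ] (Fin k → ℝ) := W.subtype ∘ₗ g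
  have hπ : ∀ (x : Fin k → ℝ) i, ∑ j, LinearMap.toMatrix' π i j * x j = π x i := by
    intro x i
    have := congrFun (LinearMap.toMatrix'_mulVec π x) i
    rwa [Matrix.mulVec, dotProduct] at this
  obtain ⟨Λ, hΛ⟩ := hN fun i j => LinearMap.toMatrix' π i j
  refine ⟨Λ, fun b => (Iff.trans ?_ (hΛ b))⟩
  simp only [hπ]
  constructor
  · rintro ⟨x, hx⟩
    let w : W := ⟨Matrix.mulVecLin (Matrix.of a) x, ⟨x, rfl⟩⟩
    refine ⟨w, fun i => ?_⟩
    have hw : g w = w := LinearMap.congr_fun hg w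
    have : π w i = ∑ j, a i j * x j := by
      simp only [π, LinearMap.comp_apply, hw]
      simp [w, Matrix.mulVec, dotProduct]
    exact this ▸ hx i
  · rintro ⟨x, hx⟩
    obtain ⟨x', hx'⟩ := (g x).2
    refine ⟨x', fun i => le_trans (le_of_eq ?_) (hx i)⟩
    have := congrFun hx' i
    simpa [Matrix.mulVec, dotProduct, π] using this

/-! ### Intersection graphs -/

/-- Over finitely many values a strict comparison is a non-strict one with another threshold. -/
lemma exists_strict_threshold {V : Type*} [Finite V] (f : V → ℝ) (a : ℝ) :
    ∃ y : ℝ, ∀ u, f u ≤ y ↔ f u < a := by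
  classical
  have := Fintype.ofFinite V
  obtain ⟨y, hy1, hy2⟩ := Order.exists_between_finsets
    ((Finset.univ.filter fun u => f u < a).image f) ((Finset.univ.filter fun u => a ≤ f u).image f)
    (by
      intro x hx z hz
      simp only [Finset.mem_image, Finset.mem_filter, Finset.mem_univ, true_and] at hx hz
      obtain ⟨u, hu, rfl⟩ := hx
      obtain ⟨w, hw, rfl⟩ := hz
      exact hu.trans_le hw)
  refine ⟨y, fun u => ⟨fun h => ?_, fun h => (hy1 _ ?_).le⟩⟩
  · by_contra! hlt
    exact absurd h (not_le.2 (hy2 _ (Finset.mem_image_of_mem f (by simpa using hlt))))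
  · exact Finset.mem_image_of_mem f (by simpa using h)

/-- The pairs for which `S` is the set of coordinates where `c u` is strictly smaller than `c v`
and the feasibility conditions `Λ` hold for the coordinatewise minimum. -/
lemma hasCover_chamber (k N : ℕ) : ∃ C : ℕ, ∀ (n K : ℕ), n ≤ 2 ^ K →
    ∀ (Λ : Fin N → Fin k → ℝ) (c : Fin n → Fin k → ℝ) (S : Finset (Fin k)),
      HasCover (fun u v => (∀ i ∈ S, c u i < c v i) ∧ (∀ i, i ∉ S → c v i ≤ c u i) ∧
          ∀ κ, 0 ≤ ∑ i, Λ κ i * min (c u i) (c v i)) Finset.univ Finset.univ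
        (C * (K + 1) ^ k * (n + n)) := by
  classical
  obtain ⟨C, hC⟩ := hasCover_linear k (Fin k ⊕ Fin N)
  refine ⟨C, fun n K hn Λ c S => ?_⟩
  choose y hy using fun (v : Fin n) (i : Fin k) =>
    exists_strict_threshold (fun u => c u i) (c v i)
  let φ : Fin k ⊕ Fin N → Fin k → ℝ := Sum.elim
    (fun i l => if i = l then (if i ∈ S then 1 else -1) else 0)
    (fun κ l => if l ∈ S then -Λ κ l else 0)
  let thr : Fin n → Fin k ⊕ Fin N → ℝ := fun v => Sum.elim
    (fun i => if i ∈ S then y v i else -c v i)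
    (fun κ => ∑ l, if l ∈ S then 0 else Λ κ l * c v l)
  have := hC (Fin n) K (by simpa using hn) φ c thr Finset.univ Finset.univ
  rw [Finset.card_univ, Fintype.card_fin] at this
  refine this.congr fun u _ v _ => ?_
  rw [Sum.forall, ← and_assoc]
  simp only [φ, thr, Sum.elim_inl, Sum.elim_inr, ite_mul, zero_mul, Finset.sum_ite_eq,
    Finset.mem_univ, if_true, one_mul, neg_mul]
  have h1 : (∀ i, (if i ∈ S then c u i else -c u i) ≤ if i ∈ S then y v i else -c v i) ↔
      (∀ i ∈ S, c u i < c v i) ∧ ∀ i, i ∉ S → c v i ≤ c u i := by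
    rw [← forall_and]
    refine forall_congr' fun i => ?_
    by_cases hi : i ∈ S
    · simp [hi, hy]
    · simp [hi]
  rw [h1]
  refine and_congr_right fun hS => forall_congr' fun κ => ?_
  have h2 : ∑ i, Λ κ i * min (c u i) (c v i) =
      (∑ l, if l ∈ S then 0 else Λ κ l * c v l) - ∑ l, if l ∈ S then -(Λ κ l * c u l) else 0 := by
    rw [← Finset.sum_sub_distrib]
    refine Finset.sum_congr rfl fun i _ => ?_
    by_cases hi : i ∈ S
    · simp [hi, min_eq_left (hS.1 i hi).le]
    · simp [hi, min_eq_right (hS.2 i hi)]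
  rw [h2, sub_nonneg]

/-- Ordered pairs with equal labels. Numbering the labels by `f`, the pair `u`, `v` qualifies iff
`n * f u + u` lies between `n * f v` and `n * f v + v - 1`, so this is a stabbing relation. -/
lemma hasCover_twins {α : Type*} (n K : ℕ) (hn : n ≤ 2 ^ K) (c : Fin n → α) :
    HasCover (fun u v => c u = c v ∧ u < v) Finset.univ Finset.univ
      (2 * (K + 1) * (n + n)) := by
  classical
  let f : Fin n → ℕ := fun u => Fintype.equivFin (Set.range c) ⟨c u, u, rfl⟩
  have hf : ∀ u v, f u = f v ↔ c u = c v := fun u v => by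
    simp only [f, Fin.val_inj, EmbeddingLike.apply_eq_iff_eq, Subtype.ext_iff]
  have := hasCover_stab (Finset.univ : Finset (Fin n)) Finset.univ
    (fun u => ((n * f u + u : ℕ) : ℝ)) (fun v => ((n * f v : ℕ) : ℝ))
    (fun v => ((n * f v + v : ℕ) : ℝ) - 1) K (by simpa using hn)
  rw [Finset.card_univ, Fintype.card_fin] at this
  refine this.congr fun u _ v _ => ?_
  rw [← hf, Nat.cast_le, le_sub_iff_add_le]
  norm_cast
  have hu := u.2
  have hv := v.2
  rw [Fin.lt_def]
  constructor
  · rintro ⟨h1, h2⟩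
    have h3 : f v < f u + 1 := by
      by_contra! h
      have := Nat.mul_le_mul_left n h
      rw [mul_add] at this
      omega
    have h4 : f u < f v + 1 := by
      by_contra! h
      have := Nat.mul_le_mul_left n h
      rw [mul_add] at this
      omega
    have h5 : f u = f v := by omega
    rw [h5] at h2
    exact ⟨h5, by omega⟩
  · rintro ⟨h1, h2⟩
    rw [h1]
    omega

/-- A cover of a relation `R` that contains each edge of `G` in at least one direction, and nothing
else, is a biclique cover of `G`: the sides of its bicliques are disjoint since `G` has no loops. -/
lemma exists_isBicliqueCover {n s : ℕ} {G : SimpleGraph (Fin n)} {R : Fin n → Fin n → Prop}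
    (h : HasCover R Finset.univ Finset.univ s) (h1 : ∀ u v, R u v → G.Adj u v)
    (h2 : ∀ u v, G.Adj u v → R u v ∨ R v u) :
    ∃ (m : ℕ) (A B : Fin m → Finset (Fin n)), IsBicliqueCover G A B ∧ coverSize A B ≤ s := by
  obtain ⟨L, hL1, hL2, hL3⟩ := h
  have hadj : ∀ i : Fin L.length, ∀ a ∈ (L.get i).1, ∀ b ∈ (L.get i).2, G.Adj a b :=
    fun i a ha b hb => h1 _ _ ((hL1 _ (L.get_mem i)).2.2 a ha b hb)
  refine ⟨L.length, fun i => (L.get i).1, fun i => (L.get i).2, ⟨?_, hadj, ?_⟩, ?_⟩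
  · exact fun i => Finset.disjoint_left.2 fun w hw hw' => G.loopless.irrefl w (hadj i w hw w hw')
  · intro u v huv
    rcases h2 u v huv with h | h
    · obtain ⟨b, hb, hb1, hb2⟩ := hL2 u (Finset.mem_univ _) v (Finset.mem_univ _) h
      obtain ⟨i, rfl⟩ := List.get_of_mem hb
      exact ⟨i, Or.inl ⟨hb1, hb2⟩⟩
    · obtain ⟨b, hb, hb1, hb2⟩ := hL2 v (Finset.mem_univ _) u (Finset.mem_univ _) h
      obtain ⟨i, rfl⟩ := List.get_of_mem hb
      exact ⟨i, Or.inr ⟨hb1, hb2⟩⟩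
  · refine le_trans (le_of_eq ?_) hL3
    unfold coverSize listSize
    rw [← Fin.sum_univ_fun_getElem]
    rfl

/-- Intersection graphs of polytopes cut out by translates of `k` fixed
halfspaces admit biclique covers of size `O(n (log₂ n)^k)`, with a constant
depending only on `k`. -/
theorem stmt_17 (k : ℕ) (hk : 1 ≤ k) :
    ∃ C : ℝ, 0 < C ∧ ∀ n : ℕ, 2 ≤ n → ∀ d : ℕ,
      ∀ (a : Fin k → Fin d → ℝ) (c : Fin n → Fin k → ℝ),
      (∀ v : Fin n, {x : Fin d → ℝ | ∀ i, ∑ j, a i j * x j ≤ c v i}.Nonempty) →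
      ∀ G : SimpleGraph (Fin n),
      (∀ u v, G.Adj u v ↔ u ≠ v ∧
        ({x : Fin d → ℝ | ∀ i, ∑ j, a i j * x j ≤ c u i} ∩
          {x : Fin d → ℝ | ∀ i, ∑ j, a i j * x j ≤ c v i}).Nonempty) →
      ∃ (m : ℕ) (A B : Fin m → Finset (Fin n)),
        IsBicliqueCover G A B ∧
        (coverSize A B : ℝ) ≤ C * (n : ℝ) * (Real.logb 2 n) ^ k := by
  classical
  obtain ⟨N, hN⟩ := exists_feasibility_test k
  obtain ⟨C, hC⟩ := hasCover_chamber k N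
  refine ⟨(2 ^ k * C * 2 + 4) * 3 ^ k, by positivity, fun n hn d a c hne G hG => ?_⟩
  obtain ⟨Λ, hΛ⟩ := hN d a
  set K := Nat.clog 2 n with hK
  have hnK : n ≤ 2 ^ K := Nat.le_pow_clog (by norm_num) n
  have hmeet : ∀ u v, ({x : Fin d → ℝ | ∀ i, ∑ j, a i j * x j ≤ c u i} ∩
      {x : Fin d → ℝ | ∀ i, ∑ j, a i j * x j ≤ c v i}).Nonempty ↔
      ∀ κ, 0 ≤ ∑ i, Λ κ i * min (c u i) (c v i) := by
    intro u v
    rw [← hΛ fun i => min (c u i) (c v i)]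
    simp only [Set.Nonempty, Set.mem_inter_iff, Set.mem_ofPred_eq, le_min_iff, forall_and]
  have hcover := (HasCover.exists_index fun S : {S : Finset (Fin k) // S.Nonempty} =>
    hC n K hnK Λ c S).or (hasCover_twins n K hnK c)
  obtain ⟨m, A, B, hAB, hsize⟩ := exists_isBicliqueCover (G := G) hcover (by
    rintro u v (⟨S, h1, -, h3⟩ | ⟨h1, h2⟩)
    · refine (hG u v).2 ⟨?_, (hmeet u v).2 h3⟩
      rintro rfl
      obtain ⟨i, hi⟩ := S.2
      exact lt_irrefl _ (h1 i hi)
    · refine (hG u v).2 ⟨h2.ne, ?_⟩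
      rw [h1, Set.inter_self]
      exact hne v) (by
    intro u v huv
    obtain ⟨hneq, hint⟩ := (hG u v).1 huv
    -- if some coordinate of `c u` is the smaller one, the pair lies in a chamber
    have chamber : ∀ u v, (∀ κ, 0 ≤ ∑ i, Λ κ i * min (c u i) (c v i)) → (∃ i, c u i < c v i) →
        ∃ S : {S : Finset (Fin k) // S.Nonempty}, (∀ i ∈ S.1, c u i < c v i) ∧
          (∀ i, i ∉ S.1 → c v i ≤ c u i) ∧ ∀ κ, 0 ≤ ∑ i, Λ κ i * min (c u i) (c v i) := by
      rintro u v h ⟨i, hi⟩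
      exact ⟨⟨Finset.univ.filter fun i => c u i < c v i, i, by simpa using hi⟩,
        by simp, by simp, h⟩
    by_cases h1 : ∃ i, c u i < c v i
    · exact Or.inl (Or.inl (chamber u v ((hmeet u v).1 hint) h1))
    by_cases h2 : ∃ i, c v i < c u i
    · exact Or.inr (Or.inl (chamber v u ((hmeet v u).1 (Set.inter_comm _ _ ▸ hint)) h2))
    push Not at h1 h2
    have heq : c u = c v := funext fun i => le_antisymm (h2 i) (h1 i)
    rcases lt_or_gt_of_ne hneq with h | h
    · exact Or.inl (Or.inr ⟨heq, h⟩)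
    · exact Or.inr (Or.inr ⟨heq.symm, h⟩))
  refine ⟨m, A, B, hAB, ?_⟩
  have hcard : Fintype.card {S : Finset (Fin k) // S.Nonempty} ≤ 2 ^ k :=
    (Fintype.card_subtype_le _).trans (by simp)
  have hlog1 : (1 : ℝ) ≤ Real.logb 2 n := by
    rw [Real.le_logb_iff_rpow_le (by norm_num) (by positivity)]
    simpa using hn
  have hlog : ((K : ℝ) + 1) ≤ 3 * Real.logb 2 n := by
    have h1 : (2 : ℝ) ^ (K - 1) < n := by
      exact_mod_cast Nat.pow_pred_clog_lt_self (by norm_num) (by omega)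
    have h2 : ((K - 1 : ℕ) : ℝ) ≤ Real.logb 2 n := by
      rw [Real.le_logb_iff_rpow_le (by norm_num) (by positivity), Real.rpow_natCast]
      exact h1.le
    have h3 : (K : ℝ) ≤ (K - 1 : ℕ) + 1 := by
      exact_mod_cast (by omega : K ≤ K - 1 + 1)
    linarith
  have hpow : ((K : ℝ) + 1) ^ k ≤ 3 ^ k * Real.logb 2 n ^ k := by
    rw [← mul_pow]
    gcongr
  have hself : ((K : ℝ) + 1) ≤ ((K : ℝ) + 1) ^ k :=
    le_self_pow₀ (by linarith [(Nat.cast_nonneg K : (0 : ℝ) ≤ K)]) (by omega)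
  calc (coverSize A B : ℝ)
      ≤ ((Fintype.card {S : Finset (Fin k) // S.Nonempty} * (C * (K + 1) ^ k * (n + n)) +
          2 * (K + 1) * (n + n) : ℕ) : ℝ) := by exact_mod_cast hsize
    _ ≤ ((2 ^ k * (C * (K + 1) ^ k * (n + n)) + 2 * (K + 1) * (n + n) : ℕ) : ℝ) := by
        gcongr
    _ = 2 ^ k * C * 2 * n * ((K : ℝ) + 1) ^ k + 4 * n * ((K : ℝ) + 1) := by push_cast; ring
    _ ≤ 2 ^ k * C * 2 * n * ((K : ℝ) + 1) ^ k + 4 * n * ((K : ℝ) + 1) ^ k := by gcongr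
    _ = (2 ^ k * C * 2 + 4) * n * ((K : ℝ) + 1) ^ k := by ring
    _ ≤ (2 ^ k * C * 2 + 4) * n * (3 ^ k * Real.logb 2 n ^ k) := by gcongr
    _ = _ := by ring
end

section
/- There exists a constant c > 0 such that for every n₀ there exist an integer n ≥ n₀, a set P of n points in ℝ², and a family H of n closed lower halfplanes (each of the form {(x, y) ∈ ℝ² : y ≤ m·x + q} for some m, q ∈ ℝ) such that every biclique cover of the incidence graph I(P, H) has size at least c · n^{4/3}. -/
/-- The point `p` lies on the line `y = l.1 * x + l.2`. -/
def OnLine (p l : ℝ × ℝ) : Prop := p.2 = l.1 * p.1 + l.2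

/-- If every point of `S` lies weakly below every line of `T`, then there are only linearly many
incidences between `S` and `T`. -/
lemma card_boundary_incidences_le {α β : Type*} [DecidableEq α] [DecidableEq β]
    (P : α → ℝ × ℝ) (L : β → ℝ × ℝ) (hP : Function.Injective P) (hL : Function.Injective L)
    (S : Finset α) (T : Finset β)
    (hST : ∀ a ∈ S, ∀ b ∈ T, (P a).2 ≤ (L b).1 * (P a).1 + (L b).2)
    [DecidablePred fun z : α × β => OnLine (P z.1) (L z.2)] :
    ((S ×ˢ T).filter fun z => OnLine (P z.1) (L z.2)).card ≤ S.card + 2 * T.card := by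
  classical
  set I := (S ×ˢ T).filter fun z => OnLine (P z.1) (L z.2) with hI
  -- incidences whose point is leftmost, respectively rightmost, on its line, and all others
  set I₁ := I.filter fun z => ∀ a ∈ S, OnLine (P a) (L z.2) → (P z.1).1 ≤ (P a).1 with hI₁
  set I₂ := I.filter fun z => ∀ a ∈ S, OnLine (P a) (L z.2) → (P a).1 ≤ (P z.1).1 with hI₂
  set I₃ := I.filter fun z => (∃ a ∈ S, OnLine (P a) (L z.2) ∧ (P a).1 < (P z.1).1) ∧
    ∃ a ∈ S, OnLine (P a) (L z.2) ∧ (P z.1).1 < (P a).1 with hI₃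
  have hsub : I ⊆ I₁ ∪ I₂ ∪ I₃ := by
    intro z hz
    simp only [hI₁, hI₂, hI₃, Finset.mem_union, Finset.mem_filter, hz, true_and]
    by_contra! h
    obtain ⟨⟨⟨a, ha, ha', hlt⟩, ⟨b, hb, hb', hlt'⟩⟩, h3⟩ := h
    exact absurd (h3 ⟨a, ha, ha', hlt⟩ b hb hb') (not_le.2 hlt')
  have same : ∀ a a' b, OnLine (P a) (L b) → OnLine (P a') (L b) → (P a).1 = (P a').1 →
      a = a' := by
    intro a a' b h h' hx
    apply hP
    refine Prod.ext hx ?_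
    rw [OnLine] at h h'
    rw [h, h', hx]
  have h1 : I₁.card ≤ T.card := by
    apply Finset.card_le_card_of_injOn Prod.snd
    · intro z hz
      simp only [hI₁, hI, Finset.coe_filter, Finset.mem_filter, Finset.mem_product,
        Set.mem_ofPred_eq] at hz
      exact hz.1.1.2
    · rintro ⟨a, b⟩ hz ⟨a', b'⟩ hz' (rfl : b = b')
      simp only [hI₁, hI, Finset.coe_filter, Finset.mem_filter, Finset.mem_product,
        Set.mem_ofPred_eq] at hz hz'
      rw [same a a' b hz.1.2 hz'.1.2
        (le_antisymm (hz.2 _ hz'.1.1.1 hz'.1.2) (hz'.2 _ hz.1.1.1 hz.1.2))]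
  have h2 : I₂.card ≤ T.card := by
    apply Finset.card_le_card_of_injOn Prod.snd
    · intro z hz
      simp only [hI₂, hI, Finset.coe_filter, Finset.mem_filter, Finset.mem_product,
        Set.mem_ofPred_eq] at hz
      exact hz.1.1.2
    · rintro ⟨a, b⟩ hz ⟨a', b'⟩ hz' (rfl : b = b')
      simp only [hI₂, hI, Finset.coe_filter, Finset.mem_filter, Finset.mem_product,
        Set.mem_ofPred_eq] at hz hz'
      rw [same a a' b hz.1.2 hz'.1.2
        (le_antisymm (hz'.2 _ hz.1.1.1 hz.1.2) (hz.2 _ hz'.1.1.1 hz'.1.2))]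
  have h3 : I₃.card ≤ S.card := by
    apply Finset.card_le_card_of_injOn Prod.fst
    · intro z hz
      simp only [hI₃, hI, Finset.coe_filter, Finset.mem_filter, Finset.mem_product,
        Set.mem_ofPred_eq] at hz
      exact hz.1.1.1
    · rintro ⟨a, b⟩ hz ⟨a', b'⟩ hz' (rfl : a = a')
      simp only [hI₃, hI, Finset.coe_filter, Finset.mem_filter, Finset.mem_product,
        Set.mem_ofPred_eq] at hz hz'
      obtain ⟨⟨⟨haS, hbT⟩, hab⟩, ⟨u, hu, hub, hua⟩, ⟨v, hv, hvb, hva⟩⟩ := hz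
      obtain ⟨⟨⟨-, hbT'⟩, hab'⟩, -⟩ := hz'
      have hu' := hST u hu b' hbT'
      have hv' := hST v hv b' hbT'
      rw [OnLine] at hab hab' hub hvb
      -- `b'` meets `b` at `a` and is weakly above it on both sides of `a`: the slopes agree
      have hs : (L b).1 = (L b').1 := by
        apply le_antisymm
        · by_contra! h
          nlinarith [mul_pos (sub_pos.2 h) (sub_pos.2 hva)]
        · by_contra! h
          nlinarith [mul_pos (sub_pos.2 h) (sub_pos.2 hua)]
      have : b = b' := by
        apply hL
        refine Prod.ext hs ?_
        rw [hs] at hab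
        linarith
      rw [this]
  have := Finset.card_le_card hsub
  have := Finset.card_union_le (I₁ ∪ I₂) I₃
  have := Finset.card_union_le I₁ I₂
  omega

/-- The number of point-line incidences is at most twice the size of any biclique cover of the
point-halfplane incidence graph. -/
lemma card_onLine_le_coverSize {ι κ : Type*} [Fintype ι] [Fintype κ] [DecidableEq ι]
    [DecidableEq κ] (P : ι → ℝ × ℝ) (L : κ → ℝ × ℝ)
    (hP : Function.Injective P) (hL : Function.Injective L) (G : SimpleGraph (ι ⊕ κ))
    (hG : ∀ i j, G.Adj (.inl i) (.inr j) ↔ (P i).2 ≤ (L j).1 * (P i).1 + (L j).2)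
    {m : ℕ} (A B : Fin m → Finset (ι ⊕ κ)) (hAB : IsBicliqueCover G A B)
    [DecidablePred fun z : ι × κ => OnLine (P z.1) (L z.2)] :
    (Finset.univ.filter fun z : ι × κ => OnLine (P z.1) (L z.2)).card ≤ 2 * coverSize A B := by
  obtain ⟨-, hbic, hcov⟩ := hAB
  -- boundary incidences in the two bipartite halves of the `t`-th biclique
  let F : Fin m → Finset (ι × κ) := fun t =>
    (((A t).toLeft ×ˢ (B t).toRight).filter fun z => OnLine (P z.1) (L z.2)) ∪
    (((B t).toLeft ×ˢ (A t).toRight).filter fun z => OnLine (P z.1) (L z.2))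
  have hsub : (Finset.univ.filter fun z : ι × κ => OnLine (P z.1) (L z.2)) ⊆
      Finset.univ.biUnion F := by
    rintro ⟨i, j⟩ hz
    simp only [Finset.mem_filter, Finset.mem_univ, true_and] at hz
    obtain ⟨t, ht⟩ := hcov (.inl i) (.inr j) ((hG i j).2 (le_of_eq hz))
    simp only [F, Finset.mem_biUnion, Finset.mem_univ, true_and, Finset.mem_union,
      Finset.mem_filter, Finset.mem_product, Finset.mem_toLeft, Finset.mem_toRight]
    exact ⟨t, ht.imp (fun h => ⟨h, hz⟩) fun h => ⟨h.symm, hz⟩⟩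
  have hF : ∀ t, (F t).card ≤ 2 * ((A t).card + (B t).card) := by
    intro t
    have h1 := card_boundary_incidences_le P L hP hL (A t).toLeft (B t).toRight (by
      intro a ha b hb
      exact (hG a b).1 (hbic t _ (Finset.mem_toLeft.1 ha) _ (Finset.mem_toRight.1 hb)))
    have h2 := card_boundary_incidences_le P L hP hL (B t).toLeft (A t).toRight (by
      intro a ha b hb
      exact (hG a b).1 (hbic t _ (Finset.mem_toRight.1 hb) _ (Finset.mem_toLeft.1 ha)).symm)
    have hA := (A t).card_toLeft_add_card_toRight
    have hB := (B t).card_toLeft_add_card_toRight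
    have hu : (F t).card ≤ _ := Finset.card_union_le _ _
    omega
  calc _ ≤ (Finset.univ.biUnion F).card := Finset.card_le_card hsub
    _ ≤ ∑ t, (F t).card := Finset.card_biUnion_le
    _ ≤ ∑ t, 2 * ((A t).card + (B t).card) := Finset.sum_le_sum fun t _ => hF t
    _ = 2 * coverSize A B := by rw [coverSize, Finset.mul_sum]

/-- The `k × 2k²` integer grid, enumerated by `Fin (k * (2 * k ^ 2))`. It serves both as the point
set and, read as pairs (slope, intercept), as the set of boundary lines. -/
def grid (k : ℕ) (i : Fin (k * (2 * k ^ 2))) : ℝ × ℝ :=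
  (((finProdFinEquiv.symm i).1 : ℕ), ((finProdFinEquiv.symm i).2 : ℕ))

lemma grid_injective (k : ℕ) : Function.Injective (grid k) := by
  intro i j h
  simp only [grid, Prod.mk.injEq, Nat.cast_inj] at h
  exact finProdFinEquiv.symm.injective (Prod.ext (Fin.ext h.1) (Fin.ext h.2))

/-- The grid has at least `k⁴` incidences: `(x, m x + q)` lies on the line with slope `m` and
intercept `q`, and it is in the grid when `x, m < k` and `q < k²`. -/
lemma pow_four_le_card_onLine (k : ℕ)
    [DecidablePred fun z : Fin (k * (2 * k ^ 2)) × Fin (k * (2 * k ^ 2)) =>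
      OnLine (grid k z.1) (grid k z.2)] :
    k ^ 4 ≤ (Finset.univ.filter fun z : Fin (k * (2 * k ^ 2)) × Fin (k * (2 * k ^ 2)) =>
      OnLine (grid k z.1) (grid k z.2)).card := by
  have hy : ∀ w : Fin k × Fin k × Fin (k ^ 2),
      (w.2.1 : ℕ) * w.1 + w.2.2 < 2 * k ^ 2 := by
    rintro ⟨x, m, q⟩
    have : (m : ℕ) * x ≤ k * k := Nat.mul_le_mul m.2.le x.2.le
    have := q.2
    simp only
    nlinarith
  have hq : ∀ w : Fin k × Fin k × Fin (k ^ 2), (w.2.2 : ℕ) < 2 * k ^ 2 := fun w => by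
    have := w.2.2.2
    omega
  let f : Fin k × Fin k × Fin (k ^ 2) → Fin (k * (2 * k ^ 2)) × Fin (k * (2 * k ^ 2)) := fun w =>
    (finProdFinEquiv (w.1, ⟨w.2.1 * w.1 + w.2.2, hy w⟩), finProdFinEquiv (w.2.1, ⟨w.2.2, hq w⟩))
  have hf : Function.Injective f := by
    rintro ⟨x, m, q⟩ ⟨x', m', q'⟩ h
    simp only [f, Prod.mk.injEq, EmbeddingLike.apply_eq_iff_eq, Fin.mk.injEq] at h
    simp only [Prod.mk.injEq]
    exact ⟨h.1.1, h.2.1, Fin.ext h.2.2⟩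
  have hcard : k ^ 4 = (Finset.univ : Finset (Fin k × Fin k × Fin (k ^ 2))).card := by
    simp only [Finset.card_univ, Fintype.card_prod, Fintype.card_fin]
    ring
  rw [hcard]
  apply Finset.card_le_card_of_injOn f _ hf.injOn
  intro w _
  rw [Finset.mem_coe, Finset.mem_filter]
  refine ⟨Finset.mem_univ _, ?_⟩
  simp only [f, OnLine, grid, Equiv.symm_apply_apply]
  push_cast
  rfl

/-- There exist incidence graphs of `n` points and `n` closed lower halfplanes
every biclique cover of which has size `Ω(n^{4/3})`. -/
theorem stmt_18 :
    ∃ c : ℝ, 0 < c ∧ ∀ n₀ : ℕ, ∃ n : ℕ, n₀ ≤ n ∧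
      ∃ (P : Fin n → ℝ × ℝ) (mq : Fin n → ℝ × ℝ),
        Function.Injective P ∧
        ∀ G : SimpleGraph (Fin n ⊕ Fin n),
          (∀ i j, G.Adj (.inl i) (.inr j) ↔
            (P i).2 ≤ (mq j).1 * (P i).1 + (mq j).2) →
          (∀ i j, ¬ G.Adj (.inl i) (.inl j)) →
          (∀ i j, ¬ G.Adj (.inr i) (.inr j)) →
          ∀ (m : ℕ) (A B : Fin m → Finset (Fin n ⊕ Fin n)),
            IsBicliqueCover G A B →
            c * (n : ℝ) ^ ((4 : ℝ) / 3) ≤ (coverSize A B : ℝ) := by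
  classical
  refine ⟨1 / 32, by norm_num, fun n₀ => ?_⟩
  obtain ⟨k, hk⟩ : ∃ k, k = n₀ + 1 := ⟨_, rfl⟩
  refine ⟨k * (2 * k ^ 2), ?_, grid k, grid k, grid_injective k, ?_⟩
  · have : 0 < 2 * k ^ 2 := by
      subst hk
      positivity
    have := Nat.le_mul_of_pos_right k this
    omega
  intro G hG _ _ m A B hAB
  have h : k ^ 4 ≤ 2 * coverSize A B := (pow_four_le_card_onLine k).trans
    (card_onLine_le_coverSize _ _ (grid_injective k) (grid_injective k) G hG A B hAB)
  have h' : (k : ℝ) ^ 4 ≤ 2 * coverSize A B := by exact_mod_cast h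
  -- crude bound `n = 2k³ ≤ (2k)³`, which makes the exponent `4/3` exact
  have hn : ((k * (2 * k ^ 2) : ℕ) : ℝ) ^ ((4 : ℝ) / 3) ≤ (2 * k : ℝ) ^ 4 := by
    have h0 : (0 : ℝ) ≤ 2 * k := by positivity
    calc ((k * (2 * k ^ 2) : ℕ) : ℝ) ^ ((4 : ℝ) / 3)
        ≤ ((2 * k : ℝ) ^ 3) ^ ((4 : ℝ) / 3) := by
          apply Real.rpow_le_rpow (by positivity) _ (by norm_num)
          push_cast
          nlinarith [pow_nonneg (Nat.cast_nonneg (α := ℝ) k) 3]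
      _ = (2 * k : ℝ) ^ 4 := by
          rw [← Real.rpow_natCast, ← Real.rpow_natCast, ← Real.rpow_mul h0]
          norm_num
  have : (2 * k : ℝ) ^ 4 = 16 * (k : ℝ) ^ 4 := by ring
  linarith
end

section
/- There exists a constant c > 0 such that for every n₀ there exist an integer n ≥ n₀ and points p_1, …, p_n ∈ ℝ² such that every biclique cover of the unit disk graph on these points (the graph on vertex set {1, …, n} in which distinct i and j are adjacent if and only if the Euclidean distance between p_i and p_j is at most 2) has size at least c · n^{4/3}. -/
open Finset

/-- The incidences between a set of points `(a, b)` and a set of lines `(m, k)`, where `(m, k)`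
stands for the line `y = m x + k`. -/
def incidences (S T : Finset (ℕ × ℕ)) : Finset ((ℕ × ℕ) × (ℕ × ℕ)) :=
  (S ×ˢ T).filter fun q => q.1.2 = q.2.1 * q.1.1 + q.2.2

/-- Points lying on or below every one of a set of lines have few incidences with them. Each
incidence either uses the line of smallest slope through its point, or the rightmost point on
its line. -/
theorem card_incidences_le (S T : Finset (ℕ × ℕ))
    (h : ∀ p ∈ S, ∀ l ∈ T, p.2 ≤ l.1 * p.1 + l.2) :
    (incidences S T).card ≤ S.card + T.card := by
  classical
  let flattest : (ℕ × ℕ) × (ℕ × ℕ) → Prop := fun q =>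
    ∀ l ∈ T, q.1.2 = l.1 * q.1.1 + l.2 → q.2.1 ≤ l.1
  rw [← card_filter_add_card_filter_not (s := incidences S T) flattest]
  refine Nat.add_le_add ?_ ?_
  · refine card_le_card_of_injOn Prod.fst ?_ ?_
    · rintro ⟨p, l⟩ hq
      simp only [incidences, coe_filter, mem_filter, mem_product, Set.mem_ofPred_eq] at hq
      exact hq.1.1.1
    · rintro ⟨p, l⟩ hq ⟨p', l'⟩ hq' (rfl : p = p')
      simp only [incidences, coe_filter, mem_filter, mem_product, Set.mem_ofPred_eq, flattest]
        at hq hq'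
      obtain ⟨⟨⟨_, hl⟩, e⟩, hmin⟩ := hq
      obtain ⟨⟨⟨_, hl'⟩, e'⟩, hmin'⟩ := hq'
      have h1 : l.1 = l'.1 := le_antisymm (hmin l' hl' e') (hmin' l hl e)
      have h2 : l.2 = l'.2 := by rw [h1] at e; omega
      rw [Prod.ext h1 h2]
  · -- A second incident point `p'` to the right of `p` on `l` would lie above a line through `p`
    -- of slope smaller than that of `l`.
    have key : ∀ p p' l : ℕ × ℕ, p' ∈ S → p.2 = l.1 * p.1 + l.2 → p'.2 = l.1 * p'.1 + l.2 →
        ¬ flattest (p, l) → ¬ p.1 < p'.1 := by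
      intro p p' l hp' e e' hn hlt
      simp only [flattest] at hn
      push Not at hn
      obtain ⟨l', hl', e2, hm⟩ := hn
      have := h p' hp' l' hl'
      nlinarith
    refine card_le_card_of_injOn Prod.snd ?_ ?_
    · rintro ⟨p, l⟩ hq
      simp only [incidences, coe_filter, mem_filter, mem_product, Set.mem_ofPred_eq] at hq
      exact hq.1.1.2
    · rintro ⟨p, l⟩ hq ⟨p', l'⟩ hq' (rfl : l = l')
      simp only [incidences, coe_filter, mem_filter, mem_product, Set.mem_ofPred_eq] at hq hq'
      obtain ⟨⟨⟨hp, _⟩, e⟩, hn⟩ := hq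
      obtain ⟨⟨⟨hp', _⟩, e'⟩, hn'⟩ := hq'
      have h1 : p.1 = p'.1 :=
        le_antisymm (not_lt.1 (key p' p l hp e' e hn')) (not_lt.1 (key p p' l hp' e e' hn))
      have h2 : p.2 = p'.2 := by rw [e, e', h1]
      rw [Prod.ext h1 h2]

/-- The grid of points `(a, b)`. It is tall enough to meet every line of `lineSet N` in every
column. -/
def pointSet (N : ℕ) : Finset (ℕ × ℕ) := range N ×ˢ range (2 * N ^ 2)

/-- The lines `y = m x + k`, encoded as pairs `(m, k)`. -/
def lineSet (N : ℕ) : Finset (ℕ × ℕ) := range N ×ˢ range (N ^ 2)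

theorem pow_four_le_card_incidences (N : ℕ) :
    N ^ 4 ≤ (incidences (pointSet N) (lineSet N)).card := by
  have hc : (range N ×ˢ lineSet N).card = N ^ 4 := by simp [lineSet]; ring
  rw [← hc]
  refine card_le_card_of_injOn (fun q => ((q.1, q.2.1 * q.1 + q.2.2), q.2)) ?_ ?_
  · rintro ⟨a, m, k⟩ hq
    simp only [lineSet, coe_product, Set.mem_prod, mem_coe, mem_range] at hq
    obtain ⟨ha, hm, hk⟩ := hq
    simp only [incidences, pointSet, lineSet, coe_filter, mem_product, mem_range,
      Set.mem_ofPred_eq, and_true]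
    refine ⟨⟨ha, ?_⟩, hm, hk⟩
    nlinarith
  · rintro ⟨a, l⟩ _ ⟨a', l'⟩ _ hq
    simp only [Prod.mk.injEq] at hq
    rw [hq.1.1, hq.2]

/-- The centre representing the point `(a, b)`, at scale `ε`. -/
noncomputable def pointPos (ε : ℝ) (p : ℕ × ℕ) : EuclideanSpace ℝ (Fin 2) :=
  !₂[ε * p.1, ε ^ 2 / 4 * (2 * p.2 - (p.1 : ℝ) ^ 2)]

/-- The centre representing the line `y = m x + k`, at scale `ε`. The summand `1` puts the
circle of radius `2` midway between the integer points on the line and those just above it. -/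
noncomputable def linePos (ε : ℝ) (l : ℕ × ℕ) : EuclideanSpace ℝ (Fin 2) :=
  !₂[ε * l.1, ε ^ 2 / 4 * ((l.1 : ℝ) ^ 2 + 2 * l.2 + 1) - 2]

/-- With `D` the difference of the second coordinates, less `2`, the condition `dist ≤ 2` reads
`ε² (2 (b - m a - k) - 1) + D² ≤ 0`, and `D² ≤ ε²` for the chosen scale. -/
theorem dist_pointPos_linePos_le_iff {N : ℕ} (hN : 0 < N) {p l : ℕ × ℕ}
    (hp : p ∈ pointSet N) (hl : l ∈ lineSet N) :
    dist (pointPos (1 / (4 * (N : ℝ) ^ 2)) p) (linePos (1 / (4 * (N : ℝ) ^ 2)) l) ≤ 2 ↔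
      p.2 ≤ l.1 * p.1 + l.2 := by
  obtain ⟨a, b⟩ := p
  obtain ⟨m, k⟩ := l
  simp only [pointSet, lineSet, mem_product, mem_range] at hp hl
  obtain ⟨ha, hb⟩ := hp
  obtain ⟨hm, hk⟩ := hl
  have hN' : (1 : ℝ) ≤ N := by exact_mod_cast hN
  have ha' : (a : ℝ) ≤ N := by exact_mod_cast ha.le
  have hm' : (m : ℝ) ≤ N := by exact_mod_cast hm.le
  have hb' : (b : ℝ) ≤ 2 * (N : ℝ) ^ 2 := by exact_mod_cast hb.le
  have hk' : (k : ℝ) ≤ (N : ℝ) ^ 2 := by exact_mod_cast hk.le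
  have ha0 : (0 : ℝ) ≤ a := a.cast_nonneg
  have hm0 : (0 : ℝ) ≤ m := m.cast_nonneg
  have hb0 : (0 : ℝ) ≤ b := b.cast_nonneg
  have hk0 : (0 : ℝ) ≤ k := k.cast_nonneg
  have hε : (0 : ℝ) < 1 / (4 * (N : ℝ) ^ 2) := by positivity
  have hεN : 1 / (4 * (N : ℝ) ^ 2) * (N : ℝ) ^ 2 = 1 / 4 := by field_simp
  generalize 1 / (4 * (N : ℝ) ^ 2) = ε at hε hεN ⊢
  obtain ⟨E, hE⟩ : ∃ E : ℝ, E = 2 * b - (a : ℝ) ^ 2 - (m : ℝ) ^ 2 - 2 * k - 1 := ⟨_, rfl⟩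
  have ha2 : (a : ℝ) ^ 2 ≤ (N : ℝ) ^ 2 := by gcongr
  have hm2 : (m : ℝ) ^ 2 ≤ (N : ℝ) ^ 2 := by gcongr
  have hN2 : (1 : ℝ) ≤ (N : ℝ) ^ 2 := by nlinarith
  have hE1 : E ≤ 9 * (N : ℝ) ^ 2 := by nlinarith
  have hE2 : -(9 * (N : ℝ) ^ 2) ≤ E := by nlinarith
  have hD : (ε * E / 4) ^ 2 ≤ 1 := by
    have h1 : ε * E ≤ 9 / 4 := by nlinarith
    have h2 : -(9 / 4) ≤ ε * E := by nlinarith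
    nlinarith
  have hsq : (ε * a - ε * m) ^ 2 +
      (ε ^ 2 / 4 * (2 * b - (a : ℝ) ^ 2) - (ε ^ 2 / 4 * ((m : ℝ) ^ 2 + 2 * k + 1) - 2)) ^ 2
      = 4 + ε ^ 2 * (2 * ((b : ℝ) - m * a - k) - 1 + (ε * E / 4) ^ 2) := by
    rw [hE]; ring
  rw [EuclideanSpace.dist_eq, Real.sqrt_le_left (by norm_num)]
  simp only [pointPos, linePos, Fin.sum_univ_two, Real.dist_eq, sq_abs, PiLp.toLp_apply,
    Matrix.cons_val_zero, Matrix.cons_val_one]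
  rw [hsq]
  have hε2 : 0 < ε ^ 2 := by positivity
  constructor
  · intro h
    by_contra! hlt
    have hlt' : (m : ℝ) * a + k + 1 ≤ b := by exact_mod_cast hlt
    nlinarith [sq_nonneg (ε * E / 4)]
  · intro h
    have h' : (b : ℝ) ≤ m * a + k := by exact_mod_cast h
    nlinarith

/-- The vertices of the graph: the points and the lines. -/
abbrev Vertex (N : ℕ) : Type := pointSet N ⊕ lineSet N

theorem card_vertex (N : ℕ) : Fintype.card (Vertex N) = 3 * N ^ 3 := by
  rw [Fintype.card_sum, Fintype.card_coe, Fintype.card_coe]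
  simp [pointSet, lineSet]; ring

/-- The centre of the unit disk of a vertex. -/
noncomputable def vertexPos (N : ℕ) : Vertex N → EuclideanSpace ℝ (Fin 2) :=
  Sum.elim (fun p => pointPos (1 / (4 * (N : ℝ) ^ 2)) p)
    (fun l => linePos (1 / (4 * (N : ℝ) ^ 2)) l)

/-- The points among a set of vertices. -/
def pointPart {N : ℕ} (A : Finset (Vertex N)) : Finset (ℕ × ℕ) :=
  A.toLeft.map (Function.Embedding.subtype _)

/-- The lines among a set of vertices. -/
def linePart {N : ℕ} (A : Finset (Vertex N)) : Finset (ℕ × ℕ) :=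
  A.toRight.map (Function.Embedding.subtype _)

theorem card_pointPart_add_card_linePart {N : ℕ} (A : Finset (Vertex N)) :
    (pointPart A).card + (linePart A).card = A.card := by
  simp [pointPart, linePart, card_toLeft_add_card_toRight]

theorem mem_pointPart {N : ℕ} {A : Finset (Vertex N)} {p : ℕ × ℕ} :
    p ∈ pointPart A ↔ ∃ h : p ∈ pointSet N, Sum.inl ⟨p, h⟩ ∈ A := by
  simp [pointPart]

theorem mem_linePart {N : ℕ} {A : Finset (Vertex N)} {l : ℕ × ℕ} :
    l ∈ linePart A ↔ ∃ h : l ∈ lineSet N, Sum.inr ⟨l, h⟩ ∈ A := by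
  simp [linePart]

theorem card_incidences_biclique_le {N : ℕ} (hN : 0 < N) (A B : Finset (Vertex N))
    (h : ∀ a ∈ A, ∀ b ∈ B, dist (vertexPos N a) (vertexPos N b) ≤ 2) :
    (incidences (pointPart A) (linePart B)).card ≤ (pointPart A).card + (linePart B).card := by
  refine card_incidences_le _ _ fun p hp l hl => ?_
  obtain ⟨hp, hpA⟩ := mem_pointPart.1 hp
  obtain ⟨hl, hlB⟩ := mem_linePart.1 hl
  have hd := h _ hpA _ hlB
  simp only [vertexPos, Sum.elim_inl, Sum.elim_inr] at hd
  exact (dist_pointPos_linePos_le_iff hN hp hl).1 hd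

/-- Every incidence is an edge, so it appears in some biclique of the cover, in one of the two
orientations. -/
theorem pow_four_le_cover {N : ℕ} (hN : 0 < N) {m : ℕ} (A B : Fin m → Finset (Vertex N))
    (hAB : ∀ i, ∀ a ∈ A i, ∀ b ∈ B i, dist (vertexPos N a) (vertexPos N b) ≤ 2)
    (hcov : ∀ u v, u ≠ v → dist (vertexPos N u) (vertexPos N v) ≤ 2 →
      ∃ i, (u ∈ A i ∧ v ∈ B i) ∨ (v ∈ A i ∧ u ∈ B i)) :
    N ^ 4 ≤ ∑ i, ((A i).card + (B i).card) := by
  classical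
  calc N ^ 4 ≤ (incidences (pointSet N) (lineSet N)).card := pow_four_le_card_incidences N
    _ ≤ (univ.biUnion fun i => incidences (pointPart (A i)) (linePart (B i)) ∪
          incidences (pointPart (B i)) (linePart (A i))).card := by
        refine card_le_card ?_
        rintro ⟨p, l⟩ hq
        simp only [incidences, mem_filter, mem_product] at hq
        obtain ⟨⟨hp, hl⟩, e⟩ := hq
        obtain ⟨i, hi⟩ := hcov (Sum.inl ⟨p, hp⟩) (Sum.inr ⟨l, hl⟩) (by simp)
          ((dist_pointPos_linePos_le_iff hN hp hl).2 e.le)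
        simp only [mem_biUnion, mem_univ, true_and, mem_union, incidences, mem_filter,
          mem_product]
        refine ⟨i, ?_⟩
        rcases hi with ⟨h1, h2⟩ | ⟨h1, h2⟩
        · exact Or.inl ⟨⟨mem_pointPart.2 ⟨hp, h1⟩, mem_linePart.2 ⟨hl, h2⟩⟩, e⟩
        · exact Or.inr ⟨⟨mem_pointPart.2 ⟨hp, h2⟩, mem_linePart.2 ⟨hl, h1⟩⟩, e⟩
    _ ≤ ∑ i, ((A i).card + (B i).card) := by
        refine card_biUnion_le.trans (sum_le_sum fun i _ => (card_union_le _ _).trans ?_)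
        have h1 := card_incidences_biclique_le hN (A i) (B i) (hAB i)
        have h2 := card_incidences_biclique_le hN (B i) (A i)
          fun b hb a ha => by rw [dist_comm]; exact hAB i a ha b hb
        have h3 := card_pointPart_add_card_linePart (A i)
        have h4 := card_pointPart_add_card_linePart (B i)
        omega

/-- There exist unit disk graphs on `n` vertices every biclique cover of which
has size `Ω(n^{4/3})`. -/
theorem stmt_19 :
    ∃ c : ℝ, 0 < c ∧ ∀ n₀ : ℕ, ∃ n : ℕ, n₀ ≤ n ∧
      ∃ p : Fin n → EuclideanSpace ℝ (Fin 2),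
        ∀ G : SimpleGraph (Fin n),
          (∀ i j, G.Adj i j ↔ i ≠ j ∧ dist (p i) (p j) ≤ 2) →
          ∀ (m : ℕ) (A B : Fin m → Finset (Fin n)),
            IsBicliqueCover G A B →
            c * (n : ℝ) ^ ((4 : ℝ) / 3) ≤ (coverSize A B : ℝ) := by
  refine ⟨((3 : ℝ) ^ ((4 : ℝ) / 3))⁻¹, by positivity, fun n₀ => ?_⟩
  obtain ⟨N, hN, hn₀⟩ : ∃ N : ℕ, 0 < N ∧ n₀ ≤ N := ⟨n₀ + 1, by omega, by omega⟩
  have hle : N ≤ N ^ 3 := Nat.le_self_pow (by norm_num) N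
  let e : Vertex N ≃ Fin (3 * N ^ 3) := Fintype.equivFinOfCardEq (card_vertex N)
  refine ⟨3 * N ^ 3, by omega, fun i => vertexPos N (e.symm i), ?_⟩
  rintro G hG m A B ⟨-, hAB, hcov⟩
  have key := pow_four_le_cover hN (fun i => (A i).map e.symm.toEmbedding)
    (fun i => (B i).map e.symm.toEmbedding)
    (fun i a ha b hb => by
      rw [mem_map_equiv] at ha hb
      simpa using ((hG _ _).1 (hAB i _ ha _ hb)).2)
    (fun u v huv hd => by
      simpa only [mem_map_equiv, Equiv.symm_symm] using
        hcov (e u) (e v) ((hG _ _).2 ⟨by simpa using huv, by simpa using hd⟩))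
  simp only [card_map] at key
  have hpow : (((3 * N ^ 3 : ℕ) : ℝ)) ^ ((4 : ℝ) / 3) = 3 ^ ((4 : ℝ) / 3) * (N : ℝ) ^ 4 := by
    push_cast
    rw [Real.mul_rpow (by norm_num) (by positivity), ← Real.rpow_natCast (N : ℝ) 3,
      ← Real.rpow_mul (by positivity), ← Real.rpow_natCast (N : ℝ) 4]
    norm_num
  rw [hpow, inv_mul_cancel_left₀ (by positivity)]
  exact_mod_cast key
end
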